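/- Let 1<p<∞. There exists a constant C_p>0 such that for every smooth, divergence-free, axially symmetric vector field u = u^r(r,z)e_r + u^θ(r,z)e_θ + u^z(r,z)e_z on ℝ³ with sufficient decay, writing w^θ = ∂_z u^r − ∂_r u^z and Ω = w^θ/r, one has ‖∇(u^r/r)‖_{L^p(ℝ³)} ≤ C_p ‖Ω‖_{L^p(ℝ³)}, where u^r/r is regarded as a function on ℝ³ and ∇ is the full spatial gradient. -/

import Mathlib

open MeasureTheory Set ENNReal

noncomputable section

abbrev E3 : Type := EuclideanSpace ℝ (Fin 3)

def pd (i : Fin 3) (f : E3 → ℝ) (x : E3) : ℝ :=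
  fderiv ℝ f x (EuclideanSpace.single i 1)

/-- Distance to the `x₃`-axis. -/
def rad (x : E3) : ℝ := Real.sqrt (x 0 ^ 2 + x 1 ^ 2)

/-- Partial derivative in the `r` variable of a function of `(r, z)`. -/
def pdr (f : ℝ → ℝ → ℝ) (r z : ℝ) : ℝ := deriv (fun r' => f r' z) r

/-- Partial derivative in the `z` variable of a function of `(r, z)`. -/
def pdz (f : ℝ → ℝ → ℝ) (r z : ℝ) : ℝ := deriv (fun z' => f r z') z

/-- A vector field is axially symmetric with cylindrical components `vr, vθ, vz`. -/
def AxisymVec (v : E3 → E3) (vr vθ vz : ℝ → ℝ → ℝ) : Prop :=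
  ∀ x : E3, rad x ≠ 0 →
    v x 0 = vr (rad x) (x 2) * (x 0 / rad x) - vθ (rad x) (x 2) * (x 1 / rad x) ∧
    v x 1 = vr (rad x) (x 2) * (x 1 / rad x) + vθ (rad x) (x 2) * (x 0 / rad x) ∧
    v x 2 = vz (rad x) (x 2)

/-- `Ω = w^θ/r` with `w^θ = ∂_z u^r − ∂_r u^z`, as a function on `ℝ³`. -/
def OmegaFun (ur uz : ℝ → ℝ → ℝ) (x : E3) : ℝ :=
  (pdz ur (rad x) (x 2) - pdr uz (rad x) (x 2)) / rad x

/-! ### A Bellman function for the heat flow -/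

/-- The Bellman function `X ^ a + Y ^ b + d * X * (X ^ a + Y ^ b) ^ m`. -/
def bell (a b m d X Y : ℝ) : ℝ := X ^ a + Y ^ b + d * (X * (X ^ a + Y ^ b) ^ m)

def bellX (a b m d X Y : ℝ) : ℝ :=
  a * X ^ (a - 1) + d * ((X ^ a + Y ^ b) ^ m
    + X * (m * (X ^ a + Y ^ b) ^ (m - 1) * (a * X ^ (a - 1))))

def bellY (a b m d X Y : ℝ) : ℝ :=
  b * Y ^ (b - 1) + d * (X * (m * (X ^ a + Y ^ b) ^ (m - 1) * (b * Y ^ (b - 1))))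

def bellXX (a b m d X Y : ℝ) : ℝ :=
  a * ((a - 1) * X ^ (a - 1 - 1)) + d * (2 * (m * (X ^ a + Y ^ b) ^ (m - 1) * (a * X ^ (a - 1)))
    + X * (m * ((m - 1) * (X ^ a + Y ^ b) ^ (m - 1 - 1)) * (a * X ^ (a - 1)) ^ 2
      + m * (X ^ a + Y ^ b) ^ (m - 1) * (a * ((a - 1) * X ^ (a - 1 - 1)))))

def bellXY (a b m d X Y : ℝ) : ℝ :=
  d * (m * (X ^ a + Y ^ b) ^ (m - 1) * (b * Y ^ (b - 1))
    + X * (m * ((m - 1) * (X ^ a + Y ^ b) ^ (m - 1 - 1)) * (a * X ^ (a - 1))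
      * (b * Y ^ (b - 1))))

def bellYY (a b m d X Y : ℝ) : ℝ :=
  b * ((b - 1) * Y ^ (b - 1 - 1)) + d * (X * (m * ((m - 1) * (X ^ a + Y ^ b) ^ (m - 1 - 1))
    * (b * Y ^ (b - 1)) ^ 2
      + m * (X ^ a + Y ^ b) ^ (m - 1) * (b * ((b - 1) * Y ^ (b - 1 - 1)))))

section Derivatives

variable {a b m d : ℝ} {X Y : ℝ → ℝ} {X' Y' s : ℝ}

lemma hasDerivAt_rpow_comp {c : ℝ} (hX : HasDerivAt X X' s) (h : 0 < X s) :
    HasDerivAt (fun s => X s ^ c) (c * X s ^ (c - 1) * X') s := by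
  have := hX.rpow_const (p := c) (Or.inl h.ne')
  convert this using 1; ring

lemma hasDerivAt_bell (hX : HasDerivAt X X' s) (hY : HasDerivAt Y Y' s)
    (hXs : 0 < X s) (hYs : 0 < Y s) :
    HasDerivAt (fun s => bell a b m d (X s) (Y s))
      (bellX a b m d (X s) (Y s) * X' + bellY a b m d (X s) (Y s) * Y') s := by
  have hS : 0 < X s ^ a + Y s ^ b := by positivity
  have h1 := (hasDerivAt_rpow_comp (c := a) hX hXs).add (hasDerivAt_rpow_comp (c := b) hY hYs)
  have h2 := hasDerivAt_rpow_comp (c := m) h1 hS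
  refine (h1.add ((hX.mul h2).const_mul d)).congr_deriv ?_
  simp only [bellX, bellY, Pi.add_apply]; ring

lemma hasDerivAt_bellX (hX : HasDerivAt X X' s) (hY : HasDerivAt Y Y' s)
    (hXs : 0 < X s) (hYs : 0 < Y s) :
    HasDerivAt (fun s => bellX a b m d (X s) (Y s))
      (bellXX a b m d (X s) (Y s) * X' + bellXY a b m d (X s) (Y s) * Y') s := by
  have hS : 0 < X s ^ a + Y s ^ b := by positivity
  have h1 := (hasDerivAt_rpow_comp (c := a) hX hXs).add (hasDerivAt_rpow_comp (c := b) hY hYs)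
  have h2 := hasDerivAt_rpow_comp (c := m) h1 hS
  have h3 := hasDerivAt_rpow_comp (c := m - 1) h1 hS
  have h4 := (hasDerivAt_rpow_comp (c := a - 1) hX hXs).const_mul a
  refine (h4.add ((h2.add (hX.mul ((h3.const_mul m).mul h4))).const_mul d)).congr_deriv ?_
  simp only [bellXX, bellXY, Pi.add_apply, Pi.mul_apply]; ring

lemma hasDerivAt_bellY (hX : HasDerivAt X X' s) (hY : HasDerivAt Y Y' s)
    (hXs : 0 < X s) (hYs : 0 < Y s) :
    HasDerivAt (fun s => bellY a b m d (X s) (Y s))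
      (bellXY a b m d (X s) (Y s) * X' + bellYY a b m d (X s) (Y s) * Y') s := by
  have hS : 0 < X s ^ a + Y s ^ b := by positivity
  have h1 := (hasDerivAt_rpow_comp (c := a) hX hXs).add (hasDerivAt_rpow_comp (c := b) hY hYs)
  have h3 := hasDerivAt_rpow_comp (c := m - 1) h1 hS
  have h4 := (hasDerivAt_rpow_comp (c := b - 1) hY hYs).const_mul b
  refine (h4.add ((hX.mul ((h3.const_mul m).mul h4)).const_mul d)).congr_deriv ?_
  simp only [bellXY, bellYY, Pi.add_apply, Pi.mul_apply]; ring

end Derivatives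

section Continuity

variable {𝓧 : Type*} [TopologicalSpace 𝓧] {X Y : 𝓧 → ℝ}

lemma Continuous.rpow_const_of_pos (hX : Continuous X) (hX0 : ∀ z, 0 < X z) (c : ℝ) :
    Continuous fun z => X z ^ c :=
  hX.rpow_const fun z => Or.inl (hX0 z).ne'

lemma continuous_bell_comp (a b m d : ℝ) (hX : Continuous X) (hY : Continuous Y)
    (hX0 : ∀ z, 0 < X z) (hY0 : ∀ z, 0 < Y z) :
    Continuous fun z => bell a b m d (X z) (Y z) := by
  have h1 := hX.rpow_const_of_pos hX0
  have h2 := hY.rpow_const_of_pos hY0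
  have h3 := ((h1 a).add (h2 b)).rpow_const_of_pos fun z =>
    add_pos (Real.rpow_pos_of_pos (hX0 z) a) (Real.rpow_pos_of_pos (hY0 z) b)
  exact ((h1 a).add (h2 b)).add (continuous_const.mul (hX.mul (h3 m)))

lemma continuous_bellX_comp (a b m d : ℝ) (hX : Continuous X) (hY : Continuous Y)
    (hX0 : ∀ z, 0 < X z) (hY0 : ∀ z, 0 < Y z) :
    Continuous fun z => bellX a b m d (X z) (Y z) := by
  have h1 := hX.rpow_const_of_pos hX0
  have h2 := hY.rpow_const_of_pos hY0
  have h3 := ((h1 a).add (h2 b)).rpow_const_of_pos fun z =>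
    add_pos (Real.rpow_pos_of_pos (hX0 z) a) (Real.rpow_pos_of_pos (hY0 z) b)
  exact (continuous_const.mul (h1 _)).add (continuous_const.mul ((h3 m).add
    (hX.mul ((continuous_const.mul (h3 _)).mul (continuous_const.mul (h1 _))))))

lemma continuous_bellY_comp (a b m d : ℝ) (hX : Continuous X) (hY : Continuous Y)
    (hX0 : ∀ z, 0 < X z) (hY0 : ∀ z, 0 < Y z) :
    Continuous fun z => bellY a b m d (X z) (Y z) := by
  have h1 := hX.rpow_const_of_pos hX0
  have h2 := hY.rpow_const_of_pos hY0
  have h3 := ((h1 a).add (h2 b)).rpow_const_of_pos fun z =>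
    add_pos (Real.rpow_pos_of_pos (hX0 z) a) (Real.rpow_pos_of_pos (hY0 z) b)
  exact (continuous_const.mul (h2 _)).add (continuous_const.mul
    (hX.mul ((continuous_const.mul (h3 _)).mul (continuous_const.mul (h2 _)))))

lemma continuous_bellXX_comp (a b m d : ℝ) (hX : Continuous X) (hY : Continuous Y)
    (hX0 : ∀ z, 0 < X z) (hY0 : ∀ z, 0 < Y z) :
    Continuous fun z => bellXX a b m d (X z) (Y z) := by
  have h1 := hX.rpow_const_of_pos hX0
  have h2 := hY.rpow_const_of_pos hY0
  have h3 := ((h1 a).add (h2 b)).rpow_const_of_pos fun z =>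
    add_pos (Real.rpow_pos_of_pos (hX0 z) a) (Real.rpow_pos_of_pos (hY0 z) b)
  have k1 : Continuous fun z => a * X z ^ (a - 1) := continuous_const.mul (h1 _)
  have k2 : Continuous fun z => a * ((a - 1) * X z ^ (a - 1 - 1)) :=
    continuous_const.mul (continuous_const.mul (h1 _))
  have k3 : Continuous fun z => m * (X z ^ a + Y z ^ b) ^ (m - 1) := continuous_const.mul (h3 _)
  have k4 : Continuous fun z => m * ((m - 1) * (X z ^ a + Y z ^ b) ^ (m - 1 - 1)) :=
    continuous_const.mul (continuous_const.mul (h3 _))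
  exact k2.add (continuous_const.mul ((continuous_const.mul (k3.mul k1)).add
    (hX.mul ((k4.mul (k1.pow 2)).add (k3.mul k2)))))

lemma continuous_bellXY_comp (a b m d : ℝ) (hX : Continuous X) (hY : Continuous Y)
    (hX0 : ∀ z, 0 < X z) (hY0 : ∀ z, 0 < Y z) :
    Continuous fun z => bellXY a b m d (X z) (Y z) := by
  have h1 := hX.rpow_const_of_pos hX0
  have h2 := hY.rpow_const_of_pos hY0
  have h3 := ((h1 a).add (h2 b)).rpow_const_of_pos fun z =>
    add_pos (Real.rpow_pos_of_pos (hX0 z) a) (Real.rpow_pos_of_pos (hY0 z) b)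
  have k1 : Continuous fun z => a * X z ^ (a - 1) := continuous_const.mul (h1 _)
  have k2 : Continuous fun z => b * Y z ^ (b - 1) := continuous_const.mul (h2 _)
  have k3 : Continuous fun z => m * (X z ^ a + Y z ^ b) ^ (m - 1) := continuous_const.mul (h3 _)
  have k4 : Continuous fun z => m * ((m - 1) * (X z ^ a + Y z ^ b) ^ (m - 1 - 1)) :=
    continuous_const.mul (continuous_const.mul (h3 _))
  exact continuous_const.mul ((k3.mul k2).add (hX.mul ((k4.mul k1).mul k2)))

lemma continuous_bellYY_comp (a b m d : ℝ) (hX : Continuous X) (hY : Continuous Y)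
    (hX0 : ∀ z, 0 < X z) (hY0 : ∀ z, 0 < Y z) :
    Continuous fun z => bellYY a b m d (X z) (Y z) := by
  have h1 := hX.rpow_const_of_pos hX0
  have h2 := hY.rpow_const_of_pos hY0
  have h3 := ((h1 a).add (h2 b)).rpow_const_of_pos fun z =>
    add_pos (Real.rpow_pos_of_pos (hX0 z) a) (Real.rpow_pos_of_pos (hY0 z) b)
  have k1 : Continuous fun z => b * Y z ^ (b - 1) := continuous_const.mul (h2 _)
  have k2 : Continuous fun z => b * ((b - 1) * Y z ^ (b - 1 - 1)) :=
    continuous_const.mul (continuous_const.mul (h2 _))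
  have k3 : Continuous fun z => m * (X z ^ a + Y z ^ b) ^ (m - 1) := continuous_const.mul (h3 _)
  have k4 : Continuous fun z => m * ((m - 1) * (X z ^ a + Y z ^ b) ^ (m - 1 - 1)) :=
    continuous_const.mul (continuous_const.mul (h3 _))
  exact k2.add (continuous_const.mul (hX.mul ((k4.mul (k1.pow 2)).add (k3.mul k2))))

end Continuity

section Algebra

variable {a b m d X Y P Q M α γ x y : ℝ}

lemma bellman_coeff_xx (ha : 1 ≤ a) (hm0 : 0 ≤ m) (ham : a * (1 - m) = 1) (hd0 : 0 < d)
    (hX : 0 < X) (hP : 0 < P) (hQ : 0 < Q) (hM : 0 < M) :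
    0 ≤ (a * ((a - 1) * (P / X ^ 2)) + d * (2 * (m * (M / (P + Q)) * (a * (P / X)))
        + X * (m * ((m - 1) * (M / (P + Q) ^ 2)) * (a * (P / X)) ^ 2
        + m * (M / (P + Q)) * (a * ((a - 1) * (P / X ^ 2)))))) := by
  set S := P + Q with hSdef
  have hS : 0 < S := by positivity
  have hPS : P / S ≤ 1 := by rw [div_le_one hS]; linarith
  have e : d * (2 * (m * (M / S) * (a * (P / X)))
      + X * (m * ((m - 1) * (M / S ^ 2)) * (a * (P / X)) ^ 2
      + m * (M / S) * (a * ((a - 1) * (P / X ^ 2)))))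
      = d * m * (M / S) * a * (P / X) * (2 - (a * (1 - m)) * (P / S) + (a - 1)) := by
    clear_value S
    field_simp; ring
  rw [e, ham]
  have h1 : 0 ≤ a - 1 := by linarith
  have h2 : 0 ≤ 2 - 1 * (P / S) + (a - 1) := by linarith
  positivity

lemma bellman_coeff_xy (ham : a * (1 - m) = 1)
    (hX : 0 < X) (hY : 0 < Y) (hP : 0 < P) (hQ : 0 < Q) :
    d * (m * (M / (P + Q)) * (b * (Q / Y)) + X * (m * ((m - 1) * (M / (P + Q) ^ 2))
        * (a * (P / X)) * (b * (Q / Y))))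
      = d * (m * b) * (M / (P + Q)) * (Q / Y) * (Q / (P + Q)) := by
  set S := P + Q with hSdef
  have hS : 0 < S := by positivity
  have this : 1 - 1 * (P / S) = Q / S := by field_simp; linarith
  have e : d * (m * (M / S) * (b * (Q / Y)) + X * (m * ((m - 1) * (M / S ^ 2))
      * (a * (P / X)) * (b * (Q / Y))))
      = d * (m * b) * (M / S) * (Q / Y) * (1 - (a * (1 - m)) * (P / S)) := by
    clear_value S
    field_simp; ring
  rw [e, ham, this]

lemma bellman_coeff_yy (hb : 1 / 2 < b) (hb1 : b ≤ 1) (hm0 : 0 ≤ m) (hm1 : m < 1) (hd0 : 0 < d)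
    (hX : 0 < X) (hY : 0 < Y) (hP : 0 < P) (hQ : 0 < Q)
    (hM : 0 < M) (hXM : X * M ≤ P + Q) (hy : y ^ 2 ≤ 4 * Y * γ ^ 2) :
    -((4 * b * (1 - b) + 4 * d) * (Q / Y) * γ ^ 2) ≤
      (b * ((b - 1) * (Q / Y ^ 2)) + d * (X * (m * ((m - 1) * (M / (P + Q) ^ 2))
        * (b * (Q / Y)) ^ 2 + m * (M / (P + Q)) * (b * ((b - 1) * (Q / Y ^ 2)))))) * y ^ 2 := by
  set S := P + Q with hSdef
  have hS : 0 < S := by positivity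
  have hQS : Q / S ≤ 1 := by rw [div_le_one hS]; linarith
  have hXMS : X * M / S ≤ 1 := by rw [div_le_one hS]; linarith
  clear_value S
  have e : b * ((b - 1) * (Q / Y ^ 2)) + d * (X * (m * ((m - 1) * (M / S ^ 2))
      * (b * (Q / Y)) ^ 2 + m * (M / S) * (b * ((b - 1) * (Q / Y ^ 2)))))
      = - ((b * (1 - b) + d * (m * b * (X * M / S) * ((1 - m) * b * (Q / S) + (1 - b))))
        * (Q / Y ^ 2)) := by
    field_simp; ring
  have hb0 : 0 < b := by linarith
  have hbr : m * b * (X * M / S) * ((1 - m) * b * (Q / S) + (1 - b)) ≤ 1 := by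
    have h1m : 0 ≤ 1 - m := by linarith
    have h1b : 0 ≤ 1 - b := by linarith
    have h1 : (1 - m) * b * (Q / S) + (1 - b) ≤ 1 := by
      have : (1 - m) * b * (Q / S) ≤ 1 * b * 1 := by gcongr; linarith
      linarith
    have h2 : m * b * (X * M / S) ≤ 1 * 1 * 1 := by gcongr
    have h3 : 0 ≤ (1 - m) * b * (Q / S) + (1 - b) := by positivity
    calc _ ≤ (1 * 1 * 1) * (1 : ℝ) := by gcongr
      _ = 1 := by norm_num
  have h5 : (b * (1 - b) + d * (m * b * (X * M / S) * ((1 - m) * b * (Q / S) + (1 - b))))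
        * (Q / Y ^ 2) * y ^ 2 ≤ (b * (1 - b) + d * 1) * (Q / Y ^ 2) * (4 * Y * γ ^ 2) := by
    have : 0 ≤ 1 - b := by linarith
    gcongr
  have h6 : (b * (1 - b) + d * 1) * (Q / Y ^ 2) * (4 * Y * γ ^ 2)
      = (4 * b * (1 - b) + 4 * d) * (Q / Y) * γ ^ 2 := by field_simp
  rw [e]
  linarith

lemma bellman_mixed (hb : 1 / 2 < b) (hb1 : b ≤ 1) (hm0 : 0 ≤ m) (hm1 : m < 1) (hd0 : 0 < d)
    (hX : 0 < X) (hY : 0 < Y) (hP : 0 < P) (hQ : 0 < Q)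
    (hM : 0 < M) (hXM : X * M ≤ P + Q)
    (hx : x ^ 2 ≤ 4 * X * α ^ 2) (hy : y ^ 2 ≤ 4 * Y * γ ^ 2) :
    -(d * M * α ^ 2 + 16 * d * (Q / Y) * γ ^ 2) ≤
      2 * (d * (m * b) * (M / (P + Q)) * (Q / Y) * (Q / (P + Q))) * (x * y) := by
  set S := P + Q with hSdef
  have hS : 0 < S := by positivity
  have hQS : Q / S ≤ 1 := by rw [div_le_one hS]; linarith
  have hXMS : X * M / S ≤ 1 := by rw [div_le_one hS]; linarith
  clear_value S
  have hb0 : 0 < b := by linarith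
  set c := (m * b) * (M / S) * (Q / Y) * (Q / S) with hc
  have hc0 : 0 ≤ c := by positivity
  have hc1 : c ^ 2 * X * Y ≤ M * (Q / Y) := by
    have : c ^ 2 * X * Y = (M * (Q / Y)) * ((m * b) ^ 2 * (X * M / S) * (Q / S) ^ 3) := by
      rw [hc]; field_simp
    rw [this]
    have h2 : (m * b) ^ 2 * (X * M / S) * (Q / S) ^ 3 ≤ (1 * 1) ^ 2 * 1 * 1 ^ 3 := by
      gcongr
    calc _ ≤ (M * (Q / Y)) * ((1 * 1) ^ 2 * 1 * 1 ^ 3) := by gcongr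
      _ = _ := by ring
  have h3 : (2 * c * (x * y)) ^ 2 ≤ (M * α ^ 2 + 16 * (Q / Y) * γ ^ 2) ^ 2 := by
    have h4 : (x * y) ^ 2 ≤ (4 * X * α ^ 2) * (4 * Y * γ ^ 2) := by
      rw [mul_pow]; gcongr
    calc (2 * c * (x * y)) ^ 2 = 4 * c ^ 2 * (x * y) ^ 2 := by ring
      _ ≤ 4 * c ^ 2 * ((4 * X * α ^ 2) * (4 * Y * γ ^ 2)) := by gcongr
      _ = 64 * (c ^ 2 * X * Y) * (α ^ 2 * γ ^ 2) := by ring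
      _ ≤ 64 * (M * (Q / Y)) * (α ^ 2 * γ ^ 2) := by gcongr
      _ = 4 * (M * α ^ 2) * (16 * (Q / Y) * γ ^ 2) := by ring
      _ ≤ _ := by linarith [sq_nonneg (M * α ^ 2 - 16 * (Q / Y) * γ ^ 2)]
  have h5 := abs_le_of_sq_le_sq' h3 (by positivity)
  calc _ = d * -(M * α ^ 2 + 16 * (Q / Y) * γ ^ 2) := by ring
    _ ≤ d * (2 * c * (x * y)) := by gcongr; exact h5.1
    _ = _ := by rw [hc]; ring

lemma bellman_algebra (ha : 1 ≤ a) (hb : 1 / 2 < b) (hb1 : b ≤ 1)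
    (hm0 : 0 ≤ m) (hm1 : m < 1) (ham : a * (1 - m) = 1)
    (hd : d = 2 * b * (2 * b - 1) / 40) (hX : 0 < X) (hY : 0 < Y) (hP : 0 < P) (hQ : 0 < Q)
    (hM : 0 < M) (hXM : X * M ≤ P + Q)
    (hx : x ^ 2 ≤ 4 * X * α ^ 2) (hy : y ^ 2 ≤ 4 * Y * γ ^ 2) :
    d * M * α ^ 2 + 16 * d * (Q / Y) * γ ^ 2 ≤
      2 * (a * (P / X) + d * (M + X * (m * (M / (P + Q)) * (a * (P / X))))) * α ^ 2
      + 2 * (b * (Q / Y) + d * (X * (m * (M / (P + Q)) * (b * (Q / Y))))) * γ ^ 2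
      + (a * ((a - 1) * (P / X ^ 2)) + d * (2 * (m * (M / (P + Q)) * (a * (P / X)))
        + X * (m * ((m - 1) * (M / (P + Q) ^ 2)) * (a * (P / X)) ^ 2
        + m * (M / (P + Q)) * (a * ((a - 1) * (P / X ^ 2)))))) * x ^ 2
      + 2 * (d * (m * (M / (P + Q)) * (b * (Q / Y)) + X * (m * ((m - 1) * (M / (P + Q) ^ 2))
        * (a * (P / X)) * (b * (Q / Y))))) * (x * y)
      + (b * ((b - 1) * (Q / Y ^ 2)) + d * (X * (m * ((m - 1) * (M / (P + Q) ^ 2))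
        * (b * (Q / Y)) ^ 2 + m * (M / (P + Q)) * (b * ((b - 1) * (Q / Y ^ 2)))))) * y ^ 2 := by
  have hd0 : 0 < d := by
    have : 0 < 2 * b - 1 := by linarith
    rw [hd]; positivity
  have hXX := mul_nonneg (bellman_coeff_xx ha hm0 ham hd0 hX hP hQ hM) (sq_nonneg x)
  have hYY := bellman_coeff_yy hb hb1 hm0 hm1 hd0 hX hY hP hQ hM hXM hy
  have hmix := bellman_mixed hb hb1 hm0 hm1 hd0 hX hY hP hQ hM hXM hx hy
  rw [bellman_coeff_xy ham hX hY hP hQ]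
  have hX1 : 2 * (d * M * α ^ 2) ≤
      2 * (a * (P / X) + d * (M + X * (m * (M / (P + Q)) * (a * (P / X))))) * α ^ 2 := by
    have : 0 ≤ (a * (P / X) + d * (X * (m * (M / (P + Q)) * (a * (P / X))))) * α ^ 2 := by
      positivity
    linarith
  have hY1 : 2 * b * ((Q / Y) * γ ^ 2) ≤
      2 * (b * (Q / Y) + d * (X * (m * (M / (P + Q)) * (b * (Q / Y))))) * γ ^ 2 := by
    have : 0 ≤ d * (X * (m * (M / (P + Q)) * (b * (Q / Y)))) * γ ^ 2 := by positivity
    linarith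
  have h9 : 2 * b * ((Q / Y) * γ ^ 2) - (4 * b * (1 - b) + 4 * d) * (Q / Y) * γ ^ 2
      = 36 * (d * ((Q / Y) * γ ^ 2)) := by
    rw [hd]; ring
  have h10 : 0 ≤ d * ((Q / Y) * γ ^ 2) := by positivity
  linarith

end Algebra

/-- Admissible parameters for the Bellman function. -/
structure BellmanParams (a b m d : ℝ) : Prop where
  one_le_a : 1 ≤ a
  half_lt_b : 1 / 2 < b
  b_le_one : b ≤ 1
  m_nonneg : 0 ≤ m
  m_lt_one : m < 1
  a_mul : a * (1 - m) = 1
  b_mul : b * (1 + m) = 1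
  d_eq : d = 2 * b * (2 * b - 1) / 40

namespace BellmanParams

variable {a b m d X Y : ℝ} (h : BellmanParams a b m d)
include h

lemma d_pos : 0 < d := by
  have := h.half_lt_b
  have : 0 < 2 * b - 1 := by linarith
  rw [h.d_eq]; positivity

lemma mul_rpow_le (hX : 0 < X) (hY : 0 < Y) : X * (X ^ a + Y ^ b) ^ m ≤ X ^ a + Y ^ b := by
  have hP : 0 < X ^ a := Real.rpow_pos_of_pos hX a
  have hQ : 0 < Y ^ b := Real.rpow_pos_of_pos hY b
  have hm : 0 ≤ 1 - m := by linarith [h.m_lt_one]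
  have e : (X ^ a) ^ (1 - m) = X := by rw [← Real.rpow_mul hX.le, h.a_mul, Real.rpow_one]
  calc X * (X ^ a + Y ^ b) ^ m = (X ^ a) ^ (1 - m) * (X ^ a + Y ^ b) ^ m := by rw [e]
    _ ≤ (X ^ a + Y ^ b) ^ (1 - m) * (X ^ a + Y ^ b) ^ m := by
      gcongr; linarith
    _ = X ^ a + Y ^ b := by
      rw [← Real.rpow_add (by positivity)]; simp

lemma one_le_rpow_mul (hX : 0 < X) (hY : 0 < Y) :
    1 ≤ (X ^ a + Y ^ b) ^ m * (Y ^ b / Y) := by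
  have hP : 0 < X ^ a := Real.rpow_pos_of_pos hX a
  have hQ : 0 < Y ^ b := Real.rpow_pos_of_pos hY b
  have hm := h.m_nonneg
  have e : (Y ^ b) ^ m * Y ^ b = Y := by
    rw [← Real.rpow_mul hY.le, ← Real.rpow_add hY]
    rw [show b * m + b = b * (1 + m) by ring, h.b_mul, Real.rpow_one]
  rw [← mul_div_assoc, one_le_div hY]
  calc Y = (Y ^ b) ^ m * Y ^ b := e.symm
    _ ≤ _ := by gcongr; linarith

lemma bell_nonneg (hX : 0 < X) (hY : 0 < Y) : 0 ≤ bell a b m d X Y := by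
  have := h.d_pos
  unfold bell; positivity

lemma bell_le (hX : 0 < X) (hY : 0 < Y) : bell a b m d X Y ≤ (1 + d) * (X ^ a + Y ^ b) := by
  have := mul_le_mul_of_nonneg_left (h.mul_rpow_le hX hY) h.d_pos.le
  unfold bell; linarith

lemma bellman_quadratic {α γ x y : ℝ} (hX : 0 < X) (hY : 0 < Y)
    (hx : x ^ 2 ≤ 4 * X * α ^ 2) (hy : y ^ 2 ≤ 4 * Y * γ ^ 2) :
    d * (X ^ a + Y ^ b) ^ m * α ^ 2 + 16 * d * (Y ^ b / Y) * γ ^ 2 ≤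
      2 * bellX a b m d X Y * α ^ 2 + 2 * bellY a b m d X Y * γ ^ 2
        + bellXX a b m d X Y * x ^ 2 + 2 * bellXY a b m d X Y * (x * y)
        + bellYY a b m d X Y * y ^ 2 := by
  have hP : 0 < X ^ a := Real.rpow_pos_of_pos hX a
  have hQ : 0 < Y ^ b := Real.rpow_pos_of_pos hY b
  have hS : 0 < X ^ a + Y ^ b := by positivity
  have key := bellman_algebra h.one_le_a h.half_lt_b h.b_le_one h.m_nonneg h.m_lt_one h.a_mul
    h.d_eq hX hY hP hQ (Real.rpow_pos_of_pos hS m) (h.mul_rpow_le hX hY) hx hy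
  have e : ∀ {Z : ℝ}, 0 < Z → ∀ c : ℝ, Z ^ (c - 1 - 1) = Z ^ c / Z ^ 2 := fun hZ c => by
    rw [Real.rpow_sub_one hZ.ne', Real.rpow_sub_one hZ.ne', div_div, sq]
  simpa only [bellX, bellY, bellXX, bellXY, bellYY, e hX, e hY, e hS,
    Real.rpow_sub_one hX.ne', Real.rpow_sub_one hY.ne', Real.rpow_sub_one hS.ne'] using key

lemma bellman_sum {ι : Type*} [Fintype ι] {α γ x y : ι → ℝ} (hX : 0 < X) (hY : 0 < Y)
    (hx : ∀ i, x i ^ 2 ≤ 4 * X * α i ^ 2) (hy : ∀ i, y i ^ 2 ≤ 4 * Y * γ i ^ 2) (j k : ι) :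
    8 * d * (α j * γ k) ≤ ∑ i, (2 * bellX a b m d X Y * α i ^ 2 + 2 * bellY a b m d X Y * γ i ^ 2
        + bellXX a b m d X Y * x i ^ 2 + 2 * bellXY a b m d X Y * (x i * y i)
        + bellYY a b m d X Y * y i ^ 2) := by
  have hd := h.d_pos
  set M := (X ^ a + Y ^ b) ^ m
  set N := Y ^ b / Y
  have hM : 0 ≤ M := by positivity
  have hN : 0 ≤ N := by positivity
  have hMN : 1 ≤ M * N := h.one_le_rpow_mul hX hY
  have h1 : d * M * α j ^ 2 + 16 * d * N * γ k ^ 2 ≤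
      ∑ i, (d * M * α i ^ 2 + 16 * d * N * γ i ^ 2) := by
    rw [Finset.sum_add_distrib]
    exact add_le_add
      (Finset.single_le_sum (f := fun i => d * M * α i ^ 2) (fun i _ => by positivity)
        (Finset.mem_univ j))
      (Finset.single_le_sum (f := fun i => 16 * d * N * γ i ^ 2) (fun i _ => by positivity)
        (Finset.mem_univ k))
  have h2 : 8 * (α j * γ k) ≤ M * α j ^ 2 + 16 * N * γ k ^ 2 := by
    refine (abs_le_of_sq_le_sq' ?_ (by positivity)).2
    calc (8 * (α j * γ k)) ^ 2 = 64 * 1 * (α j ^ 2 * γ k ^ 2) := by ring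
      _ ≤ 64 * (M * N) * (α j ^ 2 * γ k ^ 2) := by gcongr
      _ ≤ (M * α j ^ 2 + 16 * N * γ k ^ 2) ^ 2 := by
        linarith [sq_nonneg (M * α j ^ 2 - 16 * N * γ k ^ 2)]
  have h3 := mul_le_mul_of_nonneg_left h2 hd.le
  refine le_trans ?_ (h1.trans (Finset.sum_le_sum fun i _ =>
    h.bellman_quadratic hX hY (hx i) (hy i)))
  linarith

end BellmanParams

lemma exists_bellmanParams {p q : ℝ} (hp : 2 ≤ p) (hpq : p.HolderConjugate q) :
    ∃ m d, BellmanParams (p / 2) (q / 2) m d := by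
  have hq := hpq.symm.lt
  have h := hpq.inv_add_inv_eq_one
  have hp0 : 0 < p := by linarith
  have hq0 : 0 < q := by linarith
  have h' : q + p = p * q := by field_simp at h; linarith
  refine ⟨1 - 2 / p, _, by linarith, by linarith, ?_, ?_, ?_, ?_, ?_, rfl⟩
  · nlinarith
  · rw [sub_nonneg, div_le_one hp0]; exact hp
  · have : 0 < 2 / p := by positivity
    linarith
  · field_simp; ring
  · field_simp; nlinarith

section Analysis

open SchwartzMap FourierTransform LineDeriv Laplacian Filter Topology
open scoped Real ContDiff

/-! ### The heat flow on Schwartz functions -/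

/-- The standard basis vectors. -/
abbrev basisVec (i : Fin 3) : E3 := EuclideanSpace.single i 1

lemma hasTemperateGrowth_exp_comp {φ : E3 → ℝ} (hφ : φ.HasTemperateGrowth) (h0 : ∀ ξ, φ ξ ≤ 0) :
    (fun ξ => Real.exp (φ ξ)).HasTemperateGrowth := by
  have ht : range φ ⊆ Iio 1 := by
    rintro - ⟨ξ, rfl⟩
    exact (h0 ξ).trans_lt one_pos
  refine Function.HasTemperateGrowth.comp' (g := Real.exp) ht isOpen_Iio.uniqueDiffOn
    Real.contDiff_exp.contDiffOn (fun N => ⟨0, Real.exp 1, (Real.exp_pos 1).le, ?_⟩) hφ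
  intro n _ y hy
  rw [iteratedFDerivWithin_of_isOpen n isOpen_Iio hy, norm_iteratedFDeriv_eq_norm_iteratedDeriv,
    iteratedDeriv_eq_iterate, Real.iter_deriv_exp, Real.norm_eq_abs, Real.abs_exp]
  simpa using (show y < 1 from hy).le

/-- The Fourier symbol of the heat semigroup. -/
def heatSymbol (t : ℝ) (ξ : E3) : ℝ := Real.exp (-(4 * π ^ 2 * |t|) * ‖ξ‖ ^ 2)

@[fun_prop]
lemma heatSymbol_hasTemperateGrowth (t : ℝ) : (heatSymbol t).HasTemperateGrowth :=
  hasTemperateGrowth_exp_comp (by fun_prop) fun ξ => by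
    have : 0 ≤ 4 * π ^ 2 * |t| * ‖ξ‖ ^ 2 := by positivity
    linarith

lemma heatSymbol_pos (t : ℝ) (ξ : E3) : 0 < heatSymbol t ξ := Real.exp_pos _

lemma heatSymbol_le_one (t : ℝ) (ξ : E3) : heatSymbol t ξ ≤ 1 := by
  refine Real.exp_le_one_iff.2 ?_
  have : 0 ≤ 4 * π ^ 2 * |t| * ‖ξ‖ ^ 2 := by positivity
  linarith

/-- The heat semigroup on Schwartz functions. -/
def heat (f : 𝓢(E3, ℂ)) (t : ℝ) : 𝓢(E3, ℂ) := fourierMultiplierCLM ℂ (heatSymbol t) f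

lemma fourierMultiplierCLM_eq_integral {g : E3 → ℝ} (hg : g.HasTemperateGrowth) (f : 𝓢(E3, ℂ))
    (x : E3) :
    fourierMultiplierCLM ℂ g f x
      = ∫ ξ, Complex.exp (↑(2 * π * inner ℝ ξ x) * Complex.I) * (g ξ * 𝓕 f ξ) := by
  rw [fourierMultiplierCLM_apply, fourierInv_coe, Real.fourierInv_eq']
  simp [smulLeftCLM_apply_apply hg]

lemma norm_exp_two_pi_mul_I (s : ℝ) : ‖Complex.exp (↑(2 * π * s) * Complex.I)‖ = 1 :=
  Complex.norm_exp_ofReal_mul_I _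

lemma norm_fourierMultiplierCLM_le {g : E3 → ℝ} (hg : g.HasTemperateGrowth) (f : 𝓢(E3, ℂ))
    (x : E3) : ‖fourierMultiplierCLM ℂ g f x‖ ≤ ∫ ξ, |g ξ| * ‖𝓕 f ξ‖ := by
  rw [fourierMultiplierCLM_eq_integral hg]
  refine (norm_integral_le_integral_norm _).trans_eq ?_
  simp only [norm_mul, norm_exp_two_pi_mul_I, one_mul, Complex.norm_real, Real.norm_eq_abs]

lemma heat_zero (f : 𝓢(E3, ℂ)) : heat f 0 = f := by
  have : heatSymbol 0 = fun _ => 1 := by ext ξ; simp [heatSymbol]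
  simp [heat, this]

lemma norm_heat_le (f : 𝓢(E3, ℂ)) (t : ℝ) (x : E3) : ‖heat f t x‖ ≤ ∫ ξ, ‖𝓕 f ξ‖ := by
  refine (norm_fourierMultiplierCLM_le (by fun_prop) f x).trans ?_
  have hi : Integrable fun ξ => ‖𝓕 f ξ‖ := (𝓕 f).integrable.norm
  refine integral_mono_of_nonneg (Eventually.of_forall fun ξ => by positivity) hi
    (Eventually.of_forall fun ξ => ?_)
  have := heatSymbol_le_one t ξ
  simp only [abs_of_pos (heatSymbol_pos t ξ)]
  exact mul_le_of_le_one_left (norm_nonneg _) this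

lemma lineDerivOp_fourierMultiplierCLM {g : E3 → ℝ} (hg : g.HasTemperateGrowth) (f : 𝓢(E3, ℂ))
    (v : E3) : ∂_{v} (fourierMultiplierCLM ℂ g f) = fourierMultiplierCLM ℂ g (∂_{v} f) := by
  have hv : (fun x : E3 => inner ℝ x v).HasTemperateGrowth := by fun_prop
  rw [lineDeriv_eq_fourierMultiplierCLM, lineDeriv_eq_fourierMultiplierCLM,
    ← fourierMultiplierCLM_ofReal ℂ hg, ← fourierMultiplierCLM_ofReal ℂ hg, map_smul,
    fourierMultiplierCLM_ofReal ℂ hg, fourierMultiplierCLM_ofReal ℂ hg,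
    fourierMultiplierCLM_fourierMultiplierCLM_apply hv hg,
    fourierMultiplierCLM_fourierMultiplierCLM_apply hg hv, mul_comm g]

lemma lineDerivOp_heat (f : 𝓢(E3, ℂ)) (t : ℝ) (v : E3) : ∂_{v} (heat f t) = heat (∂_{v} f) t :=
  lineDerivOp_fourierMultiplierCLM (by fun_prop) f v

lemma SchwartzMap.hasLineDerivAt (f : 𝓢(E3, ℂ)) (x v : E3) :
    HasLineDerivAt ℝ f (∂_{v} f x) x v := by
  rw [SchwartzMap.lineDerivOp_apply]
  exact f.differentiableAt.lineDifferentiableAt.hasLineDerivAt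

lemma heat_hasLineDerivAt (f : 𝓢(E3, ℂ)) (t : ℝ) (x v : E3) :
    HasLineDerivAt ℝ (heat f t) (heat (∂_{v} f) t x) x v := by
  rw [← lineDerivOp_heat]; exact (heat f t).hasLineDerivAt x v

lemma laplacian_eq_sum_basisVec (f : 𝓢(E3, ℂ)) :
    Δ f = ∑ i, ∂_{basisVec i} (∂_{basisVec i} f) := by
  simpa using SchwartzMap.laplacian_eq_sum (EuclideanSpace.basisFun (Fin 3) ℝ) f

lemma heat_continuous (f : 𝓢(E3, ℂ)) : Continuous fun z : ℝ × E3 => heat f z.1 z.2 := by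
  simp_rw [heat, fun z : ℝ × E3 => fourierMultiplierCLM_eq_integral
    (heatSymbol_hasTemperateGrowth z.1) f z.2]
  have hc : Continuous ⇑(𝓕 f : 𝓢(E3, ℂ)) := (𝓕 f).continuous
  refine continuous_of_dominated (bound := fun ξ => ‖𝓕 f ξ‖) ?_ ?_ (𝓕 f).integrable.norm ?_
  · intro z
    refine Continuous.aestronglyMeasurable ?_
    unfold heatSymbol
    fun_prop
  · intro z
    refine Eventually.of_forall fun ξ => ?_
    rw [norm_mul, norm_exp_two_pi_mul_I, one_mul, norm_mul]
    refine mul_le_of_le_one_left (norm_nonneg _) ?_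
    simpa [abs_of_pos (heatSymbol_pos z.1 ξ)] using heatSymbol_le_one z.1 ξ
  · refine Eventually.of_forall fun ξ => ?_
    unfold heatSymbol
    fun_prop

lemma heat_hasDerivAt (f : 𝓢(E3, ℂ)) {t : ℝ} (ht : 0 < t) (x : E3) :
    HasDerivAt (fun s => heat f s x)
      (∑ i, heat (∂_{basisVec i} (∂_{basisVec i} f)) t x) t := by
  have e : ∑ i, heat (∂_{basisVec i} (∂_{basisVec i} f)) t x = heat (Δ f) t x := by
    simp [laplacian_eq_sum_basisVec, heat, map_sum]
  have hF : ∀ ξ, 𝓕 (Δ f) ξ = -(2 * π) ^ 2 * ‖ξ‖ ^ 2 * 𝓕 f ξ := by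
    intro ξ
    rw [laplacian_eq_fourierMultiplierCLM, fourierMultiplierCLM_apply, FourierTransform.fourier_smul,
      FourierTransform.fourier_fourierInv_eq, smul_apply,
      smulLeftCLM_apply_apply (Function.hasTemperateGrowth_norm_sq E3)]
    simp; ring
  rw [e]
  simp_rw [heat, fun s : ℝ => fourierMultiplierCLM_eq_integral
    (heatSymbol_hasTemperateGrowth s)]
  have hcm : ∀ (h : 𝓢(E3, ℂ)) (s : ℝ), Continuous fun ξ : E3 =>
      Complex.exp (↑(2 * π * inner ℝ ξ x) * Complex.I) * (heatSymbol s ξ * 𝓕 h ξ) := by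
    intro h s
    have hc : Continuous ⇑(𝓕 h : 𝓢(E3, ℂ)) := (𝓕 h).continuous
    unfold heatSymbol
    fun_prop
  have hb : ∀ (h : 𝓢(E3, ℂ)) (s : ℝ) (ξ : E3),
      ‖Complex.exp (↑(2 * π * inner ℝ ξ x) * Complex.I) * (heatSymbol s ξ * 𝓕 h ξ)‖
        ≤ ‖𝓕 h ξ‖ := by
    intro h s ξ
    rw [norm_mul, norm_exp_two_pi_mul_I, one_mul, norm_mul]
    refine mul_le_of_le_one_left (norm_nonneg _) ?_
    simpa [abs_of_pos (heatSymbol_pos s ξ)] using heatSymbol_le_one s ξ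
  refine (hasDerivAt_integral_of_dominated_loc_of_deriv_le (bound := fun ξ => ‖𝓕 (Δ f) ξ‖)
    (F' := fun s ξ => Complex.exp (↑(2 * π * inner ℝ ξ x) * Complex.I)
      * (heatSymbol s ξ * 𝓕 (Δ f) ξ)) (s := Ioi 0)
    (Ioi_mem_nhds ht) (Eventually.of_forall fun s => (hcm f s).aestronglyMeasurable)
    ((𝓕 f).integrable.norm.mono' (hcm f t).aestronglyMeasurable
      (Eventually.of_forall fun ξ => hb f t ξ)) (hcm _ t).aestronglyMeasurable
    (Eventually.of_forall fun ξ s _ => hb _ s ξ) (𝓕 (Δ f)).integrable.norm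
    (Eventually.of_forall fun ξ s hs => ?_)).2
  have h1 : HasDerivAt (fun s => heatSymbol s ξ)
      (heatSymbol s ξ * (-(4 * π ^ 2) * ‖ξ‖ ^ 2)) s := by
    have h2 : HasDerivAt (fun s => Real.exp (-(4 * π ^ 2 * s) * ‖ξ‖ ^ 2))
        (Real.exp (-(4 * π ^ 2 * s) * ‖ξ‖ ^ 2) * (-(4 * π ^ 2 * 1) * ‖ξ‖ ^ 2)) s :=
      ((((hasDerivAt_id s).const_mul (4 * π ^ 2)).neg).mul_const (‖ξ‖ ^ 2)).exp
    have h3 : (fun s => heatSymbol s ξ) =ᶠ[𝓝 s]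
        fun s => Real.exp (-(4 * π ^ 2 * s) * ‖ξ‖ ^ 2) := by
      filter_upwards [Ioi_mem_nhds (show (0 : ℝ) < s from hs)] with r hr
      rw [heatSymbol, abs_of_pos hr]
    refine (h2.congr_of_eventuallyEq h3).congr_deriv ?_
    rw [h3.eq_of_nhds, mul_one]
  refine ((h1.ofReal_comp.mul_const (𝓕 f ξ)).const_mul _).congr_deriv ?_
  rw [hF]; push_cast; ring

/-! ### A polynomial weight -/

/-- The integrable weight `(1 + κ ‖x‖ ^ 2) ^ (-2)`. -/
def wt (κ : ℝ) (x : E3) : ℝ := ((1 + κ * ‖x‖ ^ 2) ^ 2)⁻¹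

def wt1 (κ : ℝ) (i : Fin 3) (x : E3) : ℝ := -(4 * κ * x i) * ((1 + κ * ‖x‖ ^ 2) ^ 3)⁻¹

def wt2 (κ : ℝ) (i : Fin 3) (x : E3) : ℝ :=
  -(4 * κ) * ((1 + κ * ‖x‖ ^ 2) ^ 3)⁻¹ + 24 * κ ^ 2 * x i ^ 2 * ((1 + κ * ‖x‖ ^ 2) ^ 4)⁻¹

section Weight

variable {κ : ℝ} (hκ : 0 < κ)
include hκ

lemma wt_base_pos (x : E3) : 0 < 1 + κ * ‖x‖ ^ 2 := by positivity

lemma wt_pos (x : E3) : 0 < wt κ x := by unfold wt; positivity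

lemma wt_le_one (x : E3) : wt κ x ≤ 1 := by
  refine inv_le_one_of_one_le₀ (one_le_pow₀ ?_)
  have : 0 ≤ κ * ‖x‖ ^ 2 := by positivity
  linarith

lemma continuous_wt : Continuous (wt κ) := by
  unfold wt
  exact Continuous.inv₀ (by fun_prop) fun x => by positivity

omit hκ in
lemma hasLineDerivAt_wt_base (x : E3) (i : Fin 3) :
    HasLineDerivAt ℝ (fun x : E3 => 1 + κ * ‖x‖ ^ 2) (2 * κ * x i) x (basisVec i) := by
  have h : HasDerivAt (fun s : ℝ => x + s • basisVec i) (basisVec i) 0 := by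
    simpa using ((hasDerivAt_id (0 : ℝ)).smul_const (basisVec i)).const_add x
  refine ((h.norm_sq.const_mul κ).const_add 1).congr_deriv ?_
  simp [EuclideanSpace.inner_single_right]; ring

lemma hasLineDerivAt_wt (x : E3) (i : Fin 3) :
    HasLineDerivAt ℝ (wt κ) (wt1 κ i x) x (basisVec i) := by
  have h := hasLineDerivAt_wt_base (κ := κ) x i
  have h0 := wt_base_pos hκ x
  have h1 := HasDerivAt.inv (HasDerivAt.pow h 2) (by simp; positivity)
  refine h1.congr_deriv ?_
  simp only [wt1, zero_smul, add_zero]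
  simp
  field_simp; ring

lemma hasLineDerivAt_wt1 (x : E3) (i : Fin 3) :
    HasLineDerivAt ℝ (wt1 κ i) (wt2 κ i x) x (basisVec i) := by
  have h := hasLineDerivAt_wt_base (κ := κ) x i
  have h0 := wt_base_pos hκ x
  have h1 := HasDerivAt.inv (HasDerivAt.pow h 3) (by simp; positivity)
  have h2 : HasDerivAt (fun s : ℝ => -(4 * κ * (x + s • basisVec i) i)) (-(4 * κ * 1)) 0 := by
    have : HasDerivAt (fun s : ℝ => x i + s) 1 0 := by
      simpa using (hasDerivAt_id (0 : ℝ)).const_add (x i)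
    simpa [Pi.neg_def] using (this.const_mul (4 * κ)).neg
  refine (h2.mul h1).congr_deriv ?_
  simp only [wt2, zero_smul, add_zero]
  simp
  field_simp; ring

lemma wt_sum_le (x : E3) : ∑ i, wt2 κ i x ≤ 24 * κ * wt κ x := by
  have h0 := wt_base_pos hκ x
  have hn : ‖x‖ ^ 2 = x 0 ^ 2 + x 1 ^ 2 + x 2 ^ 2 := by
    simp [EuclideanSpace.norm_sq_eq, Fin.sum_univ_three]
  have e : ∑ i, wt2 κ i x = -(12 * κ) * ((1 + κ * ‖x‖ ^ 2) ^ 3)⁻¹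
      + 24 * κ * (κ * ‖x‖ ^ 2) * ((1 + κ * ‖x‖ ^ 2) ^ 4)⁻¹ := by
    simp only [Fin.sum_univ_three, wt2]
    linear_combination (-24 * κ ^ 2 * ((1 + κ * ‖x‖ ^ 2) ^ 4)⁻¹) * hn
  rw [e, wt]
  set ρ := 1 + κ * ‖x‖ ^ 2 with hρ
  have h1 : 1 ≤ ρ := by have : 0 ≤ κ * ‖x‖ ^ 2 := by positivity
                        linarith
  rw [show κ * ‖x‖ ^ 2 = ρ - 1 by rw [hρ]; ring]
  clear_value ρ
  have e2 : 24 * κ * (ρ ^ 2)⁻¹ - (-(12 * κ) * (ρ ^ 3)⁻¹ + 24 * κ * (ρ - 1) * (ρ ^ 4)⁻¹)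
      = (24 * κ * (ρ ^ 2 - ρ + 1) + 12 * κ * ρ) * (ρ ^ 4)⁻¹ := by
    field_simp; ring
  have : 0 ≤ ρ ^ 2 - ρ + 1 := by nlinarith
  have : 0 ≤ (24 * κ * (ρ ^ 2 - ρ + 1) + 12 * κ * ρ) * (ρ ^ 4)⁻¹ := by positivity
  linarith

omit hκ in
lemma sq_coord_le (x : E3) (i : Fin 3) : x i ^ 2 ≤ ‖x‖ ^ 2 := by
  rw [EuclideanSpace.norm_sq_eq x, ← sq_abs (x i), ← Real.norm_eq_abs]
  exact Finset.single_le_sum (f := fun i => ‖x i‖ ^ 2) (fun i _ => by positivity)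
    (Finset.mem_univ i)

lemma abs_wt1_le (hκ1 : κ ≤ 1) (x : E3) (i : Fin 3) : |wt1 κ i x| ≤ 4 * wt κ x := by
  have h0 := wt_base_pos hκ x
  have h2 := sq_coord_le x i
  rw [wt1, wt]
  set ρ := 1 + κ * ‖x‖ ^ 2 with hρ
  have h1 : κ * |x i| ≤ ρ := by
    have : |x i| ≤ 1 + |x i| ^ 2 := by nlinarith [sq_nonneg (|x i| - 1)]
    rw [sq_abs] at this
    calc κ * |x i| ≤ κ * (1 + ‖x‖ ^ 2) := by gcongr; linarith
      _ ≤ ρ := by rw [hρ]; linarith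
  clear_value ρ
  rw [abs_mul, abs_neg, abs_mul, abs_mul, abs_of_pos hκ, abs_of_pos (a := (ρ ^ 3)⁻¹) (by positivity)]
  calc _ = 4 * (κ * |x i|) * (ρ ^ 3)⁻¹ := by rw [abs_of_pos four_pos]; ring
    _ ≤ 4 * ρ * (ρ ^ 3)⁻¹ := by gcongr
    _ = _ := by field_simp

lemma abs_wt2_le (hκ1 : κ ≤ 1) (x : E3) (i : Fin 3) : |wt2 κ i x| ≤ 28 * wt κ x := by
  have h0 := wt_base_pos hκ x
  have h2 := sq_coord_le x i
  rw [wt2, wt]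
  set ρ := 1 + κ * ‖x‖ ^ 2 with hρ
  have h1 : κ * x i ^ 2 ≤ ρ := by
    have := mul_le_mul_of_nonneg_left h2 hκ.le
    linarith
  have h3 : 1 ≤ ρ := by have : 0 ≤ κ * ‖x‖ ^ 2 := by positivity
                        linarith
  clear_value ρ
  refine (abs_add_le _ _).trans ?_
  have ha : |-(4 * κ) * (ρ ^ 3)⁻¹| ≤ 4 * (ρ ^ 2)⁻¹ := by
    rw [abs_mul, abs_neg, abs_of_pos (by positivity), abs_of_pos (by positivity)]
    calc 4 * κ * (ρ ^ 3)⁻¹ ≤ 4 * ρ * (ρ ^ 3)⁻¹ := by gcongr; linarith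
      _ = _ := by field_simp
  have hb : |24 * κ ^ 2 * x i ^ 2 * (ρ ^ 4)⁻¹| ≤ 24 * (ρ ^ 2)⁻¹ := by
    rw [abs_of_nonneg (by positivity)]
    calc 24 * κ ^ 2 * x i ^ 2 * (ρ ^ 4)⁻¹ = 24 * (κ * (κ * x i ^ 2)) * (ρ ^ 4)⁻¹ := by ring
      _ ≤ 24 * (ρ * ρ) * (ρ ^ 4)⁻¹ := by gcongr; linarith
      _ = _ := by field_simp
  linarith

lemma integrable_wt (hκ1 : κ ≤ 1) : Integrable (wt κ) := by
  have h := integrable_rpow_neg_one_add_norm_sq (E := E3) (μ := volume) (r := 4) (by simp; norm_num)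
  refine (h.const_mul (κ⁻¹ ^ 2)).mono' (continuous_wt hκ).aestronglyMeasurable
    (Eventually.of_forall fun x => ?_)
  rw [Real.norm_eq_abs, abs_of_pos (wt_pos hκ x), wt,
    show (-4 / 2 : ℝ) = -((2 : ℕ) : ℝ) by norm_num, Real.rpow_neg (by positivity),
    Real.rpow_natCast, inv_pow, ← mul_inv, ← mul_pow]
  gcongr
  linarith

lemma continuous_wt1 (i : Fin 3) : Continuous (wt1 κ i) := by
  unfold wt1
  exact Continuous.mul (by fun_prop) (Continuous.inv₀ (by fun_prop) fun x => by positivity)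

lemma continuous_wt2 (i : Fin 3) : Continuous (wt2 κ i) := by
  unfold wt2
  exact Continuous.add (Continuous.mul (by fun_prop)
    (Continuous.inv₀ (by fun_prop) fun x => by positivity)) (Continuous.mul (by fun_prop)
    (Continuous.inv₀ (by fun_prop) fun x => by positivity))

end Weight

/-! ### Bounded continuous functions of space and time -/

/-- Jointly continuous and bounded functions of time and space. -/
structure BddCont {V : Type*} [NormedAddCommGroup V] (φ : ℝ → E3 → V) : Prop where
  cont : Continuous fun z : ℝ × E3 => φ z.1 z.2
  bdd : ∃ C, ∀ t x, ‖φ t x‖ ≤ C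

namespace BddCont

variable {φ ψ : ℝ → E3 → ℝ} {F G : ℝ → E3 → ℂ}

lemma const (c : ℝ) : BddCont fun _ _ => c := ⟨continuous_const, ‖c‖, fun _ _ => le_rfl⟩

lemma add (hφ : BddCont φ) (hψ : BddCont ψ) : BddCont fun t x => φ t x + ψ t x := by
  obtain ⟨C, hC⟩ := hφ.bdd
  obtain ⟨D, hD⟩ := hψ.bdd
  exact ⟨hφ.cont.add hψ.cont, C + D, fun t x =>
    (norm_add_le _ _).trans (add_le_add (hC t x) (hD t x))⟩

lemma mul (hφ : BddCont φ) (hψ : BddCont ψ) : BddCont fun t x => φ t x * ψ t x := by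
  obtain ⟨C, hC⟩ := hφ.bdd
  obtain ⟨D, hD⟩ := hψ.bdd
  refine ⟨hφ.cont.mul hψ.cont, C * D, fun t x => ?_⟩
  rw [norm_mul]
  exact mul_le_mul (hC t x) (hD t x) (norm_nonneg _) ((norm_nonneg _).trans (hC t x))

lemma inner (hF : BddCont F) (hG : BddCont G) : BddCont fun t x => inner ℝ (F t x) (G t x) := by
  obtain ⟨C, hC⟩ := hF.bdd
  obtain ⟨D, hD⟩ := hG.bdd
  refine ⟨hF.cont.inner hG.cont, C * D, fun t x => (norm_inner_le_norm _ _).trans ?_⟩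
  exact mul_le_mul (hC t x) (hD t x) (norm_nonneg _) ((norm_nonneg _).trans (hC t x))

lemma norm (hF : BddCont F) : BddCont fun t x => ‖F t x‖ := by
  obtain ⟨C, hC⟩ := hF.bdd
  exact ⟨hF.cont.norm, C, fun t x => by simpa using hC t x⟩

lemma norm_sq (hF : BddCont F) : BddCont fun t x => ‖F t x‖ ^ 2 := by
  simpa only [sq] using hF.norm.mul hF.norm

lemma fsum {F : Fin 3 → ℝ → E3 → ℂ} (hF : ∀ i, BddCont (F i)) :
    BddCont fun t x => ∑ i, F i t x := by
  choose C hC using fun i => (hF i).bdd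
  exact ⟨continuous_finsetSum _ fun i _ => (hF i).cont, ∑ i, C i, fun t x =>
    (norm_sum_le _ _).trans (Finset.sum_le_sum fun i _ => hC i t x)⟩

lemma continuous_apply (hφ : BddCont φ) (t : ℝ) : Continuous (φ t) :=
  hφ.cont.comp (Continuous.prodMk_right t)

lemma continuous_time (hφ : BddCont φ) (x : E3) : Continuous fun t => φ t x :=
  hφ.cont.comp (Continuous.prodMk_left x)

/-- Composition with a function that is continuous on a quadrant away from the axes. -/
lemma comp₂ {β : ℝ → ℝ → ℝ} (hβ : ∀ {X Y : ℝ × ℝ → ℝ}, Continuous X → Continuous Y →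
    (∀ z, 0 < X z) → (∀ z, 0 < Y z) → Continuous fun z => β (X z) (Y z))
    (hφ : BddCont φ) (hψ : BddCont ψ) {δ : ℝ} (hδ : 0 < δ) (hφδ : ∀ t x, δ ≤ φ t x)
    (hψδ : ∀ t x, δ ≤ ψ t x) : BddCont fun t x => β (φ t x) (ψ t x) := by
  have hc : Continuous fun z : ℝ × ℝ => β (max z.1 δ) (max z.2 δ) :=
    hβ (continuous_fst.max continuous_const) (continuous_snd.max continuous_const)
      (fun z => lt_max_of_lt_right hδ) (fun z => lt_max_of_lt_right hδ)
  have e : ∀ t x, β (φ t x) (ψ t x) = β (max (φ t x) δ) (max (ψ t x) δ) := fun t x => by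
    rw [max_eq_left (hφδ t x), max_eq_left (hψδ t x)]
  obtain ⟨C, hC⟩ := hφ.bdd
  obtain ⟨D, hD⟩ := hψ.bdd
  simp_rw [e]
  refine ⟨hc.comp (hφ.cont.prodMk hψ.cont), ?_⟩
  obtain ⟨K, hK⟩ := ((isCompact_Icc (a := -C) (b := C)).prod
    (isCompact_Icc (a := -D) (b := D))).exists_bound_of_continuousOn hc.continuousOn
  exact ⟨K, fun t x => hK (φ t x, ψ t x) ⟨abs_le.1 (hC t x), abs_le.1 (hD t x)⟩⟩

variable {w : E3 → ℝ}

lemma integrable_mul (hφ : BddCont φ) (hw : Integrable w) (t : ℝ) :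
    Integrable fun x => φ t x * w x := by
  obtain ⟨C, hC⟩ := hφ.bdd
  exact hw.bdd_mul (c := C) (hφ.continuous_apply t).aestronglyMeasurable
    (Eventually.of_forall fun x => hC t x)

lemma continuous_integral (hφ : BddCont φ) (hw : Integrable w) :
    Continuous fun t => ∫ x, φ t x * w x := by
  obtain ⟨C, hC⟩ := hφ.bdd
  refine continuous_of_dominated (bound := fun x => C * ‖w x‖)
    (fun t => (hφ.integrable_mul hw t).aestronglyMeasurable)
    (fun t => Eventually.of_forall fun x => ?_) (hw.norm.const_mul C)
    (Eventually.of_forall fun x => (hφ.continuous_time x).mul_const _)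
  rw [norm_mul]
  gcongr
  exact hC t x

lemma hasDerivAt_integral (hφ : BddCont φ) (hψ : BddCont ψ) (hw : Integrable w) {t : ℝ}
    (ht : 0 < t) (h : ∀ t x, 0 < t → HasDerivAt (fun s => φ s x) (ψ t x) t) :
    HasDerivAt (fun t => ∫ x, φ t x * w x) (∫ x, ψ t x * w x) t := by
  obtain ⟨C, hC⟩ := hψ.bdd
  refine (hasDerivAt_integral_of_dominated_loc_of_deriv_le (bound := fun x => C * ‖w x‖)
    (F' := fun s x => ψ s x * w x) (s := Ioi 0) (Ioi_mem_nhds ht)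
    (Eventually.of_forall fun s => (hφ.integrable_mul hw s).aestronglyMeasurable)
    (hφ.integrable_mul hw t) (hψ.integrable_mul hw t).aestronglyMeasurable
    (Eventually.of_forall fun x s _ => ?_) (hw.norm.const_mul C)
    (Eventually.of_forall fun x s hs => (h s x hs).mul_const _)).2
  rw [norm_mul]
  gcongr
  exact hC s x

end BddCont

/-! ### Dissipation along the heat flow -/

/-- A bounded solution of the heat equation, with bounded derivatives. -/
structure HeatSolution (F : ℝ → E3 → ℂ) (F1 F2 : Fin 3 → ℝ → E3 → ℂ) : Prop where
  zeroth : BddCont F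
  first : ∀ i, BddCont (F1 i)
  second : ∀ i, BddCont (F2 i)
  line_zeroth : ∀ i t x, HasLineDerivAt ℝ (F t) (F1 i t x) x (basisVec i)
  line_first : ∀ i t x, HasLineDerivAt ℝ (F1 i t) (F2 i t x) x (basisVec i)
  time : ∀ t x, 0 < t → HasDerivAt (fun s => F s x) (∑ i, F2 i t x) t

lemma heat_bddCont (f : 𝓢(E3, ℂ)) : BddCont fun t x => heat f t x :=
  ⟨heat_continuous f, _, fun t x => norm_heat_le f t x⟩

lemma heat_heatSolution (f : 𝓢(E3, ℂ)) : HeatSolution (fun t x => heat f t x)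
    (fun i t x => heat (∂_{basisVec i} f) t x)
    (fun i t x => heat (∂_{basisVec i} (∂_{basisVec i} f)) t x) where
  zeroth := heat_bddCont _
  first _ := heat_bddCont _
  second _ := heat_bddCont _
  line_zeroth _ t x := heat_hasLineDerivAt f t x _
  line_first _ t x := heat_hasLineDerivAt _ t x _
  time _ x ht := heat_hasDerivAt f ht x

/-- Regularised squared modulus. -/
def rsq (η : ℝ) (F : ℝ → E3 → ℂ) (t : ℝ) (x : E3) : ℝ := ‖F t x‖ ^ 2 + η ^ 2

def rsq1 (F F1 : ℝ → E3 → ℂ) (t : ℝ) (x : E3) : ℝ := 2 * inner ℝ (F t x) (F1 t x)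

def rsq2 (F F1 F2 : ℝ → E3 → ℂ) (t : ℝ) (x : E3) : ℝ :=
  2 * (inner ℝ (F t x) (F2 t x) + inner ℝ (F1 t x) (F1 t x))

section Rsq

variable {η : ℝ} {F F1 F2 : ℝ → E3 → ℂ}

lemma rsq_ge (η : ℝ) (F : ℝ → E3 → ℂ) (t : ℝ) (x : E3) : η ^ 2 ≤ rsq η F t x := by
  unfold rsq; have : 0 ≤ ‖F t x‖ ^ 2 := by positivity
  linarith

lemma rsq_pos (hη : 0 < η) (F : ℝ → E3 → ℂ) (t : ℝ) (x : E3) : 0 < rsq η F t x :=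
  (by positivity : 0 < η ^ 2).trans_le (rsq_ge η F t x)

lemma rsq_bddCont (hF : BddCont F) : BddCont (rsq η F) := hF.norm_sq.add (BddCont.const _)

lemma rsq1_bddCont (hF : BddCont F) (hF1 : BddCont F1) : BddCont (rsq1 F F1) :=
  (BddCont.const 2).mul (hF.inner hF1)

lemma rsq2_bddCont (hF : BddCont F) (hF1 : BddCont F1) (hF2 : BddCont F2) :
    BddCont (rsq2 F F1 F2) :=
  (BddCont.const 2).mul ((hF.inner hF2).add (hF1.inner hF1))

lemma rsq_hasLineDerivAt {v x : E3} {t : ℝ} (h : HasLineDerivAt ℝ (F t) (F1 t x) x v) :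
    HasLineDerivAt ℝ (rsq η F t) (rsq1 F F1 t x) x v := by
  have := (HasDerivAt.norm_sq h).add_const (η ^ 2)
  simpa [HasLineDerivAt, rsq, rsq1] using this

lemma rsq1_hasLineDerivAt {v x : E3} {t : ℝ} (h : HasLineDerivAt ℝ (F t) (F1 t x) x v)
    (h1 : HasLineDerivAt ℝ (F1 t) (F2 t x) x v) :
    HasLineDerivAt ℝ (rsq1 F F1 t) (rsq2 F F1 F2 t x) x v := by
  have := (HasDerivAt.inner ℝ h h1).const_mul 2
  simpa [HasLineDerivAt, rsq1, rsq2] using this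

lemma rsq1_sq_le (t : ℝ) (x : E3) :
    rsq1 F F1 t x ^ 2 ≤ 4 * rsq η F t x * ‖F1 t x‖ ^ 2 := by
  have h := real_inner_mul_inner_self_le (F t x) (F1 t x)
  rw [real_inner_self_eq_norm_sq, real_inner_self_eq_norm_sq] at h
  have h2 : 0 ≤ η ^ 2 * ‖F1 t x‖ ^ 2 := by positivity
  unfold rsq1 rsq
  nlinarith

end Rsq

section Flow

variable {a b m d η : ℝ} {F G : ℝ → E3 → ℂ} {F1 F2 G1 G2 : Fin 3 → ℝ → E3 → ℂ}

/-- The Bellman function along two solutions of the heat equation. -/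
def bellFlow (a b m d η : ℝ) (F G : ℝ → E3 → ℂ) (t : ℝ) (x : E3) : ℝ :=
  bell a b m d (rsq η F t x) (rsq η G t x)

/-- First derivative of `bellFlow` along a direction in which `F, G` have derivatives `F1, G1`. -/
def bellFlow1 (a b m d η : ℝ) (F G F1 G1 : ℝ → E3 → ℂ) (t : ℝ) (x : E3) : ℝ :=
  bellX a b m d (rsq η F t x) (rsq η G t x) * rsq1 F F1 t x
    + bellY a b m d (rsq η F t x) (rsq η G t x) * rsq1 G G1 t x

/-- Second derivative of `bellFlow`. -/
def bellFlow2 (a b m d η : ℝ) (F G F1 G1 F2 G2 : ℝ → E3 → ℂ) (t : ℝ) (x : E3) : ℝ :=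
  ((bellXX a b m d (rsq η F t x) (rsq η G t x) * rsq1 F F1 t x
      + bellXY a b m d (rsq η F t x) (rsq η G t x) * rsq1 G G1 t x) * rsq1 F F1 t x
    + bellX a b m d (rsq η F t x) (rsq η G t x) * rsq2 F F1 F2 t x)
  + ((bellXY a b m d (rsq η F t x) (rsq η G t x) * rsq1 F F1 t x
      + bellYY a b m d (rsq η F t x) (rsq η G t x) * rsq1 G G1 t x) * rsq1 G G1 t x
    + bellY a b m d (rsq η F t x) (rsq η G t x) * rsq2 G G1 G2 t x)

section BddCont

variable {F1 F2 G1 G2 : ℝ → E3 → ℂ}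

lemma bddCont_comp_rsq (hη : 0 < η) (hF : BddCont F) (hG : BddCont G) {β : ℝ → ℝ → ℝ}
    (hβ : ∀ {X Y : ℝ × ℝ → ℝ}, Continuous X → Continuous Y →
    (∀ z, 0 < X z) → (∀ z, 0 < Y z) → Continuous fun z => β (X z) (Y z)) :
    BddCont fun t x => β (rsq η F t x) (rsq η G t x) :=
  BddCont.comp₂ hβ (rsq_bddCont hF) (rsq_bddCont hG) (by positivity : 0 < η ^ 2)
    (rsq_ge η F) (rsq_ge η G)

lemma bellFlow_bddCont (hη : 0 < η) (hF : BddCont F) (hG : BddCont G) :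
    BddCont (bellFlow a b m d η F G) :=
  bddCont_comp_rsq hη hF hG (continuous_bell_comp a b m d)

lemma bellFlow1_bddCont (hη : 0 < η) (hF : BddCont F) (hG : BddCont G) (hF1 : BddCont F1)
    (hG1 : BddCont G1) : BddCont (bellFlow1 a b m d η F G F1 G1) :=
  ((bddCont_comp_rsq hη hF hG (continuous_bellX_comp a b m d)).mul (rsq1_bddCont hF hF1)).add
    ((bddCont_comp_rsq hη hF hG (continuous_bellY_comp a b m d)).mul (rsq1_bddCont hG hG1))

lemma bellFlow2_bddCont (hη : 0 < η) (hF : BddCont F) (hG : BddCont G) (hF1 : BddCont F1)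
    (hG1 : BddCont G1) (hF2 : BddCont F2) (hG2 : BddCont G2) :
    BddCont (bellFlow2 a b m d η F G F1 G1 F2 G2) := by
  have hX := bddCont_comp_rsq hη hF hG (continuous_bellX_comp a b m d)
  have hY := bddCont_comp_rsq hη hF hG (continuous_bellY_comp a b m d)
  have hXX := bddCont_comp_rsq hη hF hG (continuous_bellXX_comp a b m d)
  have hXY := bddCont_comp_rsq hη hF hG (continuous_bellXY_comp a b m d)
  have hYY := bddCont_comp_rsq hη hF hG (continuous_bellYY_comp a b m d)
  have kF := rsq1_bddCont hF hF1
  have kG := rsq1_bddCont hG hG1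
  exact ((((hXX.mul kF).add (hXY.mul kG)).mul kF).add (hX.mul (rsq2_bddCont hF hF1 hF2))).add
    ((((hXY.mul kF).add (hYY.mul kG)).mul kG).add (hY.mul (rsq2_bddCont hG hG1 hG2)))

lemma bellFlow_hasLineDerivAt (hη : 0 < η) {v x : E3} {t : ℝ}
    (hF : HasLineDerivAt ℝ (F t) (F1 t x) x v) (hG : HasLineDerivAt ℝ (G t) (G1 t x) x v) :
    HasLineDerivAt ℝ (bellFlow a b m d η F G t) (bellFlow1 a b m d η F G F1 G1 t x) x v := by
  have := hasDerivAt_bell (a := a) (b := b) (m := m) (d := d) (rsq_hasLineDerivAt (η := η) hF)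
    (rsq_hasLineDerivAt (η := η) hG) (rsq_pos hη F t _) (rsq_pos hη G t _)
  simpa [HasLineDerivAt, bellFlow, bellFlow1] using this

lemma bellFlow1_hasLineDerivAt (hη : 0 < η) {v x : E3} {t : ℝ}
    (hF : HasLineDerivAt ℝ (F t) (F1 t x) x v) (hG : HasLineDerivAt ℝ (G t) (G1 t x) x v)
    (hF1 : HasLineDerivAt ℝ (F1 t) (F2 t x) x v) (hG1 : HasLineDerivAt ℝ (G1 t) (G2 t x) x v) :
    HasLineDerivAt ℝ (bellFlow1 a b m d η F G F1 G1 t)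
      (bellFlow2 a b m d η F G F1 G1 F2 G2 t x) x v := by
  have h1 := hasDerivAt_bellX (a := a) (b := b) (m := m) (d := d) (rsq_hasLineDerivAt (η := η) hF)
    (rsq_hasLineDerivAt (η := η) hG) (rsq_pos hη F t _) (rsq_pos hη G t _)
  have h2 := hasDerivAt_bellY (a := a) (b := b) (m := m) (d := d) (rsq_hasLineDerivAt (η := η) hF)
    (rsq_hasLineDerivAt (η := η) hG) (rsq_pos hη F t _) (rsq_pos hη G t _)
  have h3 : HasDerivAt (fun s : ℝ => rsq1 F F1 t (x + s • v)) (rsq2 F F1 F2 t x) 0 :=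
    rsq1_hasLineDerivAt hF hF1
  have h4 : HasDerivAt (fun s : ℝ => rsq1 G G1 t (x + s • v)) (rsq2 G G1 G2 t x) 0 :=
    rsq1_hasLineDerivAt hG hG1
  refine ((h1.mul h3).add (h2.mul h4)).congr_deriv ?_
  simp only [bellFlow2, zero_smul, add_zero]

end BddCont

lemma bellFlow_hasDerivAt (hη : 0 < η) (hF : HeatSolution F F1 F2) (hG : HeatSolution G G1 G2)
    {t : ℝ} (x : E3) (ht : 0 < t) :
    HasDerivAt (fun s => bellFlow a b m d η F G s x)
      (bellFlow1 a b m d η F G (fun t x => ∑ i, F2 i t x) (fun t x => ∑ i, G2 i t x) t x) t := by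
  have h1 : HasDerivAt (fun s => rsq η F s x) (rsq1 F (fun t x => ∑ i, F2 i t x) t x) t := by
    simpa [rsq, rsq1] using ((hF.time t x ht).norm_sq).add_const (η ^ 2)
  have h2 : HasDerivAt (fun s => rsq η G s x) (rsq1 G (fun t x => ∑ i, G2 i t x) t x) t := by
    simpa [rsq, rsq1] using ((hG.time t x ht).norm_sq).add_const (η ^ 2)
  exact hasDerivAt_bell h1 h2 (rsq_pos hη F t x) (rsq_pos hη G t x)

lemma bellFlow_dissipation (h : BellmanParams a b m d) (hη : 0 < η) (j k : Fin 3) (t : ℝ)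
    (x : E3) :
    bellFlow1 a b m d η F G (fun t x => ∑ i, F2 i t x) (fun t x => ∑ i, G2 i t x) t x
      + 8 * d * (‖F1 j t x‖ * ‖G1 k t x‖)
      ≤ ∑ i, bellFlow2 a b m d η F G (F1 i) (G1 i) (F2 i) (G2 i) t x := by
  have key := h.bellman_sum (α := fun i => ‖F1 i t x‖) (γ := fun i => ‖G1 i t x‖)
    (x := fun i => rsq1 F (F1 i) t x) (y := fun i => rsq1 G (G1 i) t x)
    (rsq_pos hη F t x) (rsq_pos hη G t x) (fun i => rsq1_sq_le t x) (fun i => rsq1_sq_le t x) j k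
  have e : ∑ i, bellFlow2 a b m d η F G (F1 i) (G1 i) (F2 i) (G2 i) t x
      = bellFlow1 a b m d η F G (fun t x => ∑ i, F2 i t x) (fun t x => ∑ i, G2 i t x) t x
        + ∑ i, (2 * bellX a b m d (rsq η F t x) (rsq η G t x) * ‖F1 i t x‖ ^ 2
        + 2 * bellY a b m d (rsq η F t x) (rsq η G t x) * ‖G1 i t x‖ ^ 2
        + bellXX a b m d (rsq η F t x) (rsq η G t x) * rsq1 F (F1 i) t x ^ 2
        + 2 * bellXY a b m d (rsq η F t x) (rsq η G t x) * (rsq1 F (F1 i) t x * rsq1 G (G1 i) t x)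
        + bellYY a b m d (rsq η F t x) (rsq η G t x) * rsq1 G (G1 i) t x ^ 2) := by
    have e1 : bellFlow1 a b m d η F G (fun t x => ∑ i, F2 i t x) (fun t x => ∑ i, G2 i t x) t x
        = ∑ i, (bellX a b m d (rsq η F t x) (rsq η G t x) * rsq1 F (F2 i) t x
          + bellY a b m d (rsq η F t x) (rsq η G t x) * rsq1 G (G2 i) t x) := by
      simp only [bellFlow1, rsq1, inner_sum, Finset.mul_sum, Finset.sum_add_distrib]
    rw [e1, ← Finset.sum_add_distrib]
    refine Finset.sum_congr rfl fun i _ => ?_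
    simp only [bellFlow2, rsq2, real_inner_self_eq_norm_sq]
    simp only [rsq1]
    ring
  rw [e]
  linarith

variable {κ : ℝ}

lemma integral_bellFlow2_eq (hη : 0 < η) (hκ : 0 < κ) (hκ1 : κ ≤ 1) (hF : HeatSolution F F1 F2)
    (hG : HeatSolution G G1 G2) (i : Fin 3) (t : ℝ) :
    ∫ x, bellFlow2 a b m d η F G (F1 i) (G1 i) (F2 i) (G2 i) t x * wt κ x
      = ∫ x, bellFlow a b m d η F G t x * wt2 κ i x := by
  have hw := integrable_wt hκ hκ1
  have hw1 : Integrable (wt1 κ i) := (hw.const_mul 4).mono'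
    (continuous_wt1 hκ i).aestronglyMeasurable
    (Eventually.of_forall fun x => abs_wt1_le hκ hκ1 x i)
  have hw2 : Integrable (wt2 κ i) := (hw.const_mul 28).mono'
    (continuous_wt2 hκ i).aestronglyMeasurable
    (Eventually.of_forall fun x => abs_wt2_le hκ hκ1 x i)
  have b0 := bellFlow_bddCont (a := a) (b := b) (m := m) (d := d) hη hF.zeroth hG.zeroth
  have b1 := bellFlow1_bddCont (a := a) (b := b) (m := m) (d := d) hη hF.zeroth hG.zeroth
    (hF.first i) (hG.first i)
  have b2 := bellFlow2_bddCont (a := a) (b := b) (m := m) (d := d) hη hF.zeroth hG.zeroth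
    (hF.first i) (hG.first i) (hF.second i) (hG.second i)
  have l0 := fun x => bellFlow_hasLineDerivAt (a := a) (b := b) (m := m) (d := d) hη
    (hF.line_zeroth i t x) (hG.line_zeroth i t x)
  have l1 := fun x => bellFlow1_hasLineDerivAt (a := a) (b := b) (m := m) (d := d) hη
    (hF.line_zeroth i t x) (hG.line_zeroth i t x) (hF.line_first i t x) (hG.line_first i t x)
  have i1 := integral_bilinear_hasLineDerivAt_right_eq_neg_left_of_integrable
    (B := ContinuousLinearMap.mul ℝ ℝ) (v := basisVec i) (μ := volume)
    (b2.integrable_mul hw t) (b1.integrable_mul hw1 t) (b1.integrable_mul hw t)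
    (fun x _ => l1 x) (fun x _ => hasLineDerivAt_wt hκ x i)
  have i2 := integral_bilinear_hasLineDerivAt_right_eq_neg_left_of_integrable
    (B := ContinuousLinearMap.mul ℝ ℝ) (v := basisVec i) (μ := volume)
    (b1.integrable_mul hw1 t) (b0.integrable_mul hw2 t) (b0.integrable_mul hw1 t)
    (fun x _ => l0 x) (fun x _ => hasLineDerivAt_wt1 hκ x i)
  simp only [ContinuousLinearMap.mul_apply'] at i1 i2
  linarith

lemma integral_dissipation_le (h : BellmanParams a b m d) (hη : 0 < η) (hκ : 0 < κ) (hκ1 : κ ≤ 1)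
    (hF : HeatSolution F F1 F2) (hG : HeatSolution G G1 G2) (j k : Fin 3) (t : ℝ) :
    (∫ x, bellFlow1 a b m d η F G (fun t x => ∑ i, F2 i t x) (fun t x => ∑ i, G2 i t x) t x
        * wt κ x)
      + 8 * d * ∫ x, (‖F1 j t x‖ * ‖G1 k t x‖) * wt κ x
      ≤ 24 * κ * ∫ x, bellFlow a b m d η F G t x * wt κ x := by
  have hw := integrable_wt hκ hκ1
  have hw2 : ∀ i, Integrable (wt2 κ i) := fun i => (hw.const_mul 28).mono'
    (continuous_wt2 hκ i).aestronglyMeasurable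
    (Eventually.of_forall fun x => abs_wt2_le hκ hκ1 x i)
  have b0 := bellFlow_bddCont (a := a) (b := b) (m := m) (d := d) hη hF.zeroth hG.zeroth
  have bt := bellFlow1_bddCont (a := a) (b := b) (m := m) (d := d) hη hF.zeroth hG.zeroth
    (BddCont.fsum hF.second) (BddCont.fsum hG.second)
  have b2 := fun i => bellFlow2_bddCont (a := a) (b := b) (m := m) (d := d) hη hF.zeroth hG.zeroth
    (hF.first i) (hG.first i) (hF.second i) (hG.second i)
  have bI := (hF.first j).norm.mul (hG.first k).norm
  calc _ = ∫ x, (bellFlow1 a b m d η F G (fun t x => ∑ i, F2 i t x) (fun t x => ∑ i, G2 i t x) t x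
        * wt κ x + 8 * d * ((‖F1 j t x‖ * ‖G1 k t x‖) * wt κ x)) := by
        rw [integral_add (bt.integrable_mul hw t) ((bI.integrable_mul hw t).const_mul _),
          integral_const_mul]
    _ ≤ ∫ x, ∑ i, bellFlow2 a b m d η F G (F1 i) (G1 i) (F2 i) (G2 i) t x * wt κ x := by
        refine integral_mono ((bt.integrable_mul hw t).add
          ((bI.integrable_mul hw t).const_mul _))
          (integrable_finsetSum _ fun i _ => (b2 i).integrable_mul hw t) fun x => ?_
        have := mul_le_mul_of_nonneg_right (bellFlow_dissipation (F := F) (G := G) (F1 := F1)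
          (F2 := F2) (G1 := G1) (G2 := G2) h hη j k t x) (wt_pos hκ x).le
        rw [← Finset.sum_mul]
        linarith
    _ = ∑ i, ∫ x, bellFlow a b m d η F G t x * wt2 κ i x := by
        rw [integral_finsetSum _ fun i _ => (b2 i).integrable_mul hw t]
        exact Finset.sum_congr rfl fun i _ => integral_bellFlow2_eq hη hκ hκ1 hF hG i t
    _ = ∫ x, ∑ i, bellFlow a b m d η F G t x * wt2 κ i x :=
        (integral_finsetSum _ fun i _ => b0.integrable_mul (hw2 i) t).symm
    _ ≤ ∫ x, 24 * κ * (bellFlow a b m d η F G t x * wt κ x) := by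
        refine integral_mono (integrable_finsetSum _ fun i _ => b0.integrable_mul (hw2 i) t)
          ((b0.integrable_mul hw t).const_mul _) fun x => ?_
        have h0 : 0 ≤ bellFlow a b m d η F G t x :=
          h.bell_nonneg (rsq_pos hη F t x) (rsq_pos hη G t x)
        have := mul_le_mul_of_nonneg_left (wt_sum_le hκ x) h0
        simp only [← Finset.mul_sum]
        linarith
    _ = _ := integral_const_mul _ _

/-- Energy inequality for the Bellman function on a finite time interval. -/
lemma bellman_energy (h : BellmanParams a b m d) (hη : 0 < η) (hκ : 0 < κ) (hκ1 : κ ≤ 1)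
    (hF : HeatSolution F F1 F2) (hG : HeatSolution G G1 G2) (j k : Fin 3) {T : ℝ} (hT : 0 ≤ T) :
    8 * d * ∫ t in (0 : ℝ)..T, Real.exp (-(24 * κ) * t)
        * ∫ x, (‖F1 j t x‖ * ‖G1 k t x‖) * wt κ x
      ≤ ∫ x, bellFlow a b m d η F G 0 x * wt κ x := by
  have hw := integrable_wt hκ hκ1
  have b0 := bellFlow_bddCont (a := a) (b := b) (m := m) (d := d) hη hF.zeroth hG.zeroth
  have bt := bellFlow1_bddCont (a := a) (b := b) (m := m) (d := d) hη hF.zeroth hG.zeroth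
    (BddCont.fsum hF.second) (BddCont.fsum hG.second)
  have bI := (hF.first j).norm.mul (hG.first k).norm
  set J : ℝ → ℝ := fun t => ∫ x, bellFlow a b m d η F G t x * wt κ x with hJ
  set I : ℝ → ℝ := fun t => ∫ x, (‖F1 j t x‖ * ‖G1 k t x‖) * wt κ x with hI
  have cJ : Continuous J := b0.continuous_integral hw
  have cI : Continuous I := bI.continuous_integral hw
  have cE : Continuous fun t : ℝ => Real.exp (-(24 * κ) * t) := by fun_prop
  have dE : ∀ t : ℝ, HasDerivAt (fun t : ℝ => Real.exp (-(24 * κ) * t))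
      (Real.exp (-(24 * κ) * t) * (-(24 * κ) * 1)) t := fun t =>
    ((hasDerivAt_id t).const_mul (-(24 * κ))).exp
  have dI : ∀ t : ℝ, HasDerivAt (fun t => ∫ s in (0 : ℝ)..t, Real.exp (-(24 * κ) * s) * I s)
      (Real.exp (-(24 * κ) * t) * I t) t := fun t =>
    intervalIntegral.integral_hasDerivAt_right ((cE.mul cI).intervalIntegrable _ _)
      ((cE.mul cI).stronglyMeasurableAtFilter _ _) (cE.mul cI).continuousAt
  set L : ℝ → ℝ := fun t => Real.exp (-(24 * κ) * t) * J t
    + 8 * d * ∫ s in (0 : ℝ)..t, Real.exp (-(24 * κ) * s) * I s with hL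
  have anti : AntitoneOn L (Ici 0) := by
    refine antitoneOn_of_deriv_nonpos (convex_Ici 0) ?_ ?_ ?_
    · refine ((cE.mul cJ).add (continuous_const.mul ?_)).continuousOn
      exact continuous_iff_continuousAt.2 fun t => (dI t).continuousAt
    all_goals
      intro t ht
      rw [interior_Ici] at ht
      have dJ : HasDerivAt J _ t := b0.hasDerivAt_integral bt hw ht
        (fun t x ht => bellFlow_hasDerivAt hη hF hG x ht)
      have dL := ((dE t).mul dJ).add ((dI t).const_mul (8 * d))
    · exact dL.differentiableAt.differentiableWithinAt
    · have e : deriv L t = _ := dL.deriv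
      rw [e]
      have := mul_le_mul_of_nonneg_left (integral_dissipation_le h hη hκ hκ1 hF hG j k t)
        (Real.exp_pos (-(24 * κ) * t)).le
      simp only [hJ, hI]
      linarith
  have h0 := anti (mem_Ici.2 le_rfl) (mem_Ici.2 hT) hT
  have hJT : 0 ≤ J T := integral_nonneg fun x => mul_nonneg
    (h.bell_nonneg (rsq_pos hη F T x) (rsq_pos hη G T x)) (wt_pos hκ x).le
  have h1 : 0 ≤ Real.exp (-(24 * κ) * T) * J T := by positivity
  simp only [hL, intervalIntegral.integral_same, mul_zero, Real.exp_zero, one_mul, add_zero] at h0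
  linarith

end Flow

/-! ### The bilinear heat estimate -/

lemma SchwartzMap.integrable_norm_rpow (f : 𝓢(E3, ℂ)) {p : ℝ} (hp : 0 < p) :
    Integrable fun x => ‖f x‖ ^ p := by
  have h := (f.memLp (ENNReal.ofReal p)).integrable_norm_rpow (by simpa using hp) (by simp)
  rwa [ENNReal.toReal_ofReal hp.le] at h

lemma rpow_sq_add_sq_le {s η a c : ℝ} (hs : 0 ≤ s) (hη : 0 ≤ η) (ha : 0 ≤ a) (hc : a ≤ c) :
    (s ^ 2 + η ^ 2) ^ a ≤ 2 ^ c * (s ^ (2 * a) + η ^ (2 * a)) := by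
  have key : ∀ {u v : ℝ}, 0 ≤ u → u ≤ v → (u ^ 2 + v ^ 2) ^ a ≤ 2 ^ c * v ^ (2 * a) := by
    intro u v hu huv
    have hv := hu.trans huv
    calc (u ^ 2 + v ^ 2) ^ a ≤ (2 * v ^ 2) ^ a := by
          refine Real.rpow_le_rpow (by positivity) ?_ ha
          nlinarith
      _ = 2 ^ a * v ^ (2 * a) := by
          rw [Real.mul_rpow (by norm_num) (by positivity), ← Real.rpow_natCast v 2,
            ← Real.rpow_mul hv]
          norm_num
      _ ≤ _ := by
          gcongr
          norm_num
  have h1 : 0 ≤ s ^ (2 * a) := by positivity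
  have h2 : 0 ≤ η ^ (2 * a) := by positivity
  have h3 : (0 : ℝ) ≤ 2 ^ c := by positivity
  rcases le_total s η with h | h
  · refine (key hs h).trans ?_
    gcongr
    linarith
  · rw [add_comm]
    refine (key hη h).trans ?_
    gcongr
    linarith

section Limit

variable {a b m d κ : ℝ}

lemma bellman_energy_initial (h : BellmanParams a b m d) (hκ : 0 < κ) (hκ1 : κ ≤ 1)
    (f g : 𝓢(E3, ℂ)) (j k : Fin 3) {T : ℝ} (hT : 0 ≤ T) :
    8 * d * ∫ t in (0 : ℝ)..T, Real.exp (-(24 * κ) * t)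
        * ∫ x, (‖heat (∂_{basisVec j} f) t x‖ * ‖heat (∂_{basisVec k} g) t x‖) * wt κ x
      ≤ (1 + d) * 2 ^ a * ((∫ x, ‖f x‖ ^ (2 * a)) + ∫ x, ‖g x‖ ^ (2 * b)) := by
  have hd := h.d_pos
  have ha : 0 < a := by linarith [h.one_le_a]
  have hb : 0 < b := by linarith [h.half_lt_b]
  have hw := integrable_wt hκ hκ1
  have hif := f.integrable_norm_rpow (p := 2 * a) (by positivity)
  have hig := g.integrable_norm_rpow (p := 2 * b) (by positivity)
  have hfg : Integrable fun x => ‖f x‖ ^ (2 * a) + ‖g x‖ ^ (2 * b) := hif.add hig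
  have main : ∀ η : ℝ, 0 < η → 8 * d * ∫ t in (0 : ℝ)..T, Real.exp (-(24 * κ) * t)
        * ∫ x, (‖heat (∂_{basisVec j} f) t x‖ * ‖heat (∂_{basisVec k} g) t x‖) * wt κ x
      ≤ (1 + d) * 2 ^ a * (((∫ x, ‖f x‖ ^ (2 * a)) + ∫ x, ‖g x‖ ^ (2 * b))
        + (η ^ (2 * a) + η ^ (2 * b)) * ∫ x, wt κ x) := by
    intro η hη
    refine (bellman_energy h hη hκ hκ1 (heat_heatSolution f) (heat_heatSolution g) j k hT).trans ?_
    rw [← integral_const_mul, ← integral_add hif hig, ← integral_add hfg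
      (hw.const_mul _), ← integral_const_mul]
    refine integral_mono ((bellFlow_bddCont hη (heat_bddCont f) (heat_bddCont g)).integrable_mul
      hw 0) ((hfg.add (hw.const_mul _)).const_mul _) fun x => ?_
    have hX := rsq_pos hη (fun t x => heat f t x) 0 x
    have hY := rsq_pos hη (fun t x => heat g t x) 0 x
    have e1 := h.bell_le hX hY
    simp only [rsq, heat_zero] at e1
    have w0 := wt_pos hκ x
    have w1 := wt_le_one hκ x
    have e2 := rpow_sq_add_sq_le (norm_nonneg (f x)) hη.le ha.le le_rfl
    have e3 := rpow_sq_add_sq_le (norm_nonneg (g x)) hη.le hb.le (h.b_le_one.trans h.one_le_a)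
    have e4 : bellFlow a b m d η (fun t x => heat f t x) (fun t x => heat g t x) 0 x
        ≤ (1 + d) * 2 ^ a * ((‖f x‖ ^ (2 * a) + ‖g x‖ ^ (2 * b)) + (η ^ (2 * a) + η ^ (2 * b))) := by
      simp only [bellFlow, rsq, heat_zero]
      refine e1.trans ?_
      rw [mul_assoc]
      gcongr
      linarith
    refine (mul_le_mul_of_nonneg_right e4 w0.le).trans ?_
    rw [mul_assoc]
    refine mul_le_mul_of_nonneg_left ?_ (by positivity)
    have : (‖f x‖ ^ (2 * a) + ‖g x‖ ^ (2 * b)) * wt κ x ≤ (‖f x‖ ^ (2 * a) + ‖g x‖ ^ (2 * b)) :=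
      mul_le_of_le_one_right (by positivity) w1
    linarith
  have lim : Tendsto (fun η : ℝ => (1 + d) * 2 ^ a * (((∫ x, ‖f x‖ ^ (2 * a))
      + ∫ x, ‖g x‖ ^ (2 * b)) + (η ^ (2 * a) + η ^ (2 * b)) * ∫ x, wt κ x)) (𝓝[>] 0)
      (𝓝 ((1 + d) * 2 ^ a * (((∫ x, ‖f x‖ ^ (2 * a)) + ∫ x, ‖g x‖ ^ (2 * b))
        + ((0 : ℝ) ^ (2 * a) + (0 : ℝ) ^ (2 * b)) * ∫ x, wt κ x))) := by
    have c1 := (Real.continuousAt_rpow_const (0 : ℝ) (2 * a) (Or.inr (by positivity))).tendsto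
    have c2 := (Real.continuousAt_rpow_const (0 : ℝ) (2 * b) (Or.inr (by positivity))).tendsto
    exact (tendsto_const_nhds.mul (tendsto_const_nhds.add
      ((c1.add c2).mul tendsto_const_nhds))).mono_left nhdsWithin_le_nhds
  have := ge_of_tendsto lim (eventually_nhdsWithin_of_forall fun η hη => main η hη)
  rwa [Real.zero_rpow (by positivity), Real.zero_rpow (by positivity), add_zero, zero_mul,
    add_zero] at this

/-- The bilinear space-time estimate for the heat flow. -/
lemma lintegral_heat_le (h : BellmanParams a b m d) (f g : 𝓢(E3, ℂ)) (j k : Fin 3) :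
    ∫⁻ t in Ioi (0 : ℝ), ∫⁻ x, ‖heat (∂_{basisVec j} f) t x‖ₑ * ‖heat (∂_{basisVec k} g) t x‖ₑ
      ≤ ENNReal.ofReal ((8 * d)⁻¹ * ((1 + d) * 2 ^ a)
        * ((∫ x, ‖f x‖ ^ (2 * a)) + ∫ x, ‖g x‖ ^ (2 * b))) := by
  have hd := h.d_pos
  set M := (8 * d)⁻¹ * ((1 + d) * 2 ^ a) * ((∫ x, ‖f x‖ ^ (2 * a)) + ∫ x, ‖g x‖ ^ (2 * b)) with hM
  have bI := (heat_bddCont (∂_{basisVec j} f)).norm.mul (heat_bddCont (∂_{basisVec k} g)).norm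
  set φ : ℝ → E3 → ℝ := fun t x =>
    ‖heat (∂_{basisVec j} f) t x‖ * ‖heat (∂_{basisVec k} g) t x‖ with hφ
  have φ0 : ∀ t x, 0 ≤ φ t x := fun t x => by positivity
  have e0 : ∀ t x, ‖heat (∂_{basisVec j} f) t x‖ₑ * ‖heat (∂_{basisVec k} g) t x‖ₑ
      = ENNReal.ofReal (φ t x) := fun t x => by
    rw [hφ, ENNReal.ofReal_mul (norm_nonneg _), ofReal_norm, ofReal_norm]
  simp_rw [e0]
  set κ : ℕ → ℝ := fun n => ((n : ℝ) + 1)⁻¹ with hκ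
  have κ0 : ∀ n, 0 < κ n := fun n => by positivity
  have κ1 : ∀ n, κ n ≤ 1 := fun n => inv_le_one_of_one_le₀ (by linarith [n.cast_nonneg (α := ℝ)])
  have κlim : Tendsto κ atTop (𝓝 0) := by
    simpa [hκ, one_div] using tendsto_one_div_add_atTop_nhds_zero_nat (𝕜 := ℝ)
  let S : ℕ → ℝ × E3 → ℝ≥0∞ := fun n => (Iic (n : ℝ) ×ˢ univ).indicator fun z =>
    ENNReal.ofReal (Real.exp (-(24 * κ n) * z.1) * (φ z.1 z.2 * wt (κ n) z.2))
  have cS : ∀ n, Continuous fun z : ℝ × E3 =>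
      Real.exp (-(24 * κ n) * z.1) * (φ z.1 z.2 * wt (κ n) z.2) := fun n =>
    Continuous.mul (by fun_prop) (bI.cont.mul ((continuous_wt (κ0 n)).comp continuous_snd))
  have mS : ∀ n, Measurable (S n) := fun n =>
    (ENNReal.continuous_ofReal.comp (cS n)).measurable.indicator
      (measurableSet_Iic.prod MeasurableSet.univ)
  have lS : ∀ z : ℝ × E3, Tendsto (fun n => S n z) atTop (𝓝 (ENNReal.ofReal (φ z.1 z.2))) := by
    intro z
    have t1 : Tendsto (fun n => Real.exp (-(24 * κ n) * z.1) * (φ z.1 z.2 * wt (κ n) z.2)) atTop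
        (𝓝 (φ z.1 z.2)) := by
      have c : Continuous fun s : ℝ => Real.exp (-(24 * s) * z.1) := by fun_prop
      have c2 : ContinuousAt (fun s : ℝ => wt s z.2) 0 := by
        unfold wt
        exact ContinuousAt.inv₀ (by fun_prop) (by simp)
      have := (c.continuousAt.tendsto.comp κlim).mul
        ((tendsto_const_nhds (x := φ z.1 z.2)).mul (c2.tendsto.comp κlim))
      simpa [wt] using this
    refine (ENNReal.tendsto_ofReal t1).congr' ?_
    filter_upwards [eventually_ge_atTop ⌈z.1⌉₊] with n hn
    have hz1 : z.1 ≤ (n : ℝ) := (Nat.le_ceil _).trans (by exact_mod_cast hn)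
    have hz : z ∈ Iic (n : ℝ) ×ˢ (univ : Set E3) := ⟨hz1, mem_univ _⟩
    exact (show S n z = _ from indicator_of_mem hz _).symm
  have bS : ∀ n, ∫⁻ z, S n z ∂((volume.restrict (Ioi (0 : ℝ))).prod volume) ≤ ENNReal.ofReal M := by
    intro n
    have hw := integrable_wt (κ0 n) (κ1 n)
    rw [lintegral_prod _ (mS n).aemeasurable]
    have e1 : ∀ t : ℝ, ∫⁻ x, S n (t, x) = (Iic (n : ℝ)).indicator (fun t => ENNReal.ofReal
        (Real.exp (-(24 * κ n) * t) * ∫ x, φ t x * wt (κ n) x)) t := by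
      intro t
      by_cases ht : t ∈ Iic (n : ℝ)
      · rw [indicator_of_mem ht, ← integral_const_mul, ofReal_integral_eq_lintegral_ofReal
          ((bI.integrable_mul hw t).const_mul _) (Eventually.of_forall fun x =>
            mul_nonneg (Real.exp_pos _).le (mul_nonneg (φ0 t x) (wt_pos (κ0 n) x).le))]
        refine lintegral_congr fun x => ?_
        exact indicator_of_mem (show (t, x) ∈ Iic (n : ℝ) ×ˢ univ from ⟨ht, mem_univ _⟩) _
      · rw [indicator_of_notMem ht, ← lintegral_zero (μ := (volume : Measure E3))]
        refine lintegral_congr fun x => ?_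
        exact indicator_of_notMem (fun h => ht h.1) _
    have cont : Continuous fun t => Real.exp (-(24 * κ n) * t) * ∫ x, φ t x * wt (κ n) x :=
      Continuous.mul (by fun_prop) (bI.continuous_integral hw)
    simp_rw [e1]
    rw [lintegral_indicator measurableSet_Iic, Measure.restrict_restrict measurableSet_Iic,
      inter_comm, Ioi_inter_Iic, ← ofReal_integral_eq_lintegral_ofReal
        (cont.integrableOn_Ioc) (Eventually.of_forall fun t => mul_nonneg (Real.exp_pos _).le
          (integral_nonneg fun x => mul_nonneg (φ0 t x) (wt_pos (κ0 n) x).le)),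
      ← intervalIntegral.integral_of_le n.cast_nonneg]
    refine ENNReal.ofReal_le_ofReal ?_
    have := bellman_energy_initial h (κ0 n) (κ1 n) f g j k n.cast_nonneg
    rw [hM, mul_assoc, le_inv_mul_iff₀ (by positivity)]
    exact this
  have mφ : Measurable fun z : ℝ × E3 => ENNReal.ofReal (φ z.1 z.2) :=
    (ENNReal.continuous_ofReal.comp bI.cont).measurable
  calc _ = ∫⁻ z, ENNReal.ofReal (φ z.1 z.2) ∂((volume.restrict (Ioi (0 : ℝ))).prod volume) :=
        (lintegral_prod _ mφ.aemeasurable).symm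
    _ = ∫⁻ z, liminf (fun n => S n z) atTop ∂((volume.restrict (Ioi (0 : ℝ))).prod volume) :=
        lintegral_congr fun z => (lS z).liminf_eq.symm
    _ ≤ liminf (fun n => ∫⁻ z, S n z ∂((volume.restrict (Ioi (0 : ℝ))).prod volume)) atTop :=
        lintegral_liminf_le mS
    _ ≤ _ := liminf_le_of_le (by isBoundedDefault) fun b hb => by
        obtain ⟨n, hn⟩ := hb.exists
        exact hn.trans (bS n)

end Limit

/-! ### The resolvent and second order Riesz-type operators -/

/-- Symbol of `(ε - Δ)⁻¹`. -/
def resSymbol (ε : ℝ) (ξ : E3) : ℝ := (ε + 4 * π ^ 2 * ‖ξ‖ ^ 2)⁻¹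

section Symbol

variable {ε : ℝ}

lemma resSymbol_hasTemperateGrowth (hε : 0 < ε) : (resSymbol ε).HasTemperateGrowth := by
  have h := (Function.hasTemperateGrowth_one_add_norm_sq_rpow E3 (-1)).comp
    (f := fun ξ : E3 => (2 * π / √ε) • ξ) (by fun_prop)
  have e : resSymbol ε = fun ξ => ε⁻¹ * (1 + ‖(2 * π / √ε) • ξ‖ ^ 2) ^ (-1 : ℝ) := by
    ext ξ
    rw [Real.rpow_neg_one, ← mul_inv, norm_smul, mul_pow, Real.norm_eq_abs, sq_abs, div_pow,
      Real.sq_sqrt hε.le, resSymbol]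
    congr 1
    field_simp
    ring
  rw [e]
  exact Function.HasTemperateGrowth.mul (by fun_prop) h

lemma resSymbol_nonneg (hε : 0 < ε) (ξ : E3) : 0 ≤ resSymbol ε ξ := by unfold resSymbol; positivity

end Symbol

/-- The resolvent `(ε - Δ)⁻¹`. -/
def res (ε : ℝ) (f : 𝓢(E3, ℂ)) : 𝓢(E3, ℂ) := fourierMultiplierCLM ℂ (resSymbol ε) f

lemma SchwartzMap.fourierInv_eq_fourier_neg (f : 𝓢(E3, ℂ)) (ξ : E3) :
    (𝓕⁻ f : 𝓢(E3, ℂ)) ξ = (𝓕 f : 𝓢(E3, ℂ)) (-ξ) := by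
  rw [SchwartzMap.fourierInv_coe, SchwartzMap.fourier_coe, Real.fourierInv_eq_fourier_neg]

lemma integral_fourierMultiplierCLM_mul {g : E3 → ℝ} (hg : g.HasTemperateGrowth)
    (f h : 𝓢(E3, ℂ)) :
    ∫ x, fourierMultiplierCLM ℂ g f x * h x
      = ∫ ξ, g ξ * ((𝓕 f : 𝓢(E3, ℂ)) ξ * (𝓕 h : 𝓢(E3, ℂ)) (-ξ)) := by
  rw [fourierMultiplierCLM_apply, SchwartzMap.integral_fourierInv_mul_eq]
  refine integral_congr_ae (Eventually.of_forall fun ξ => ?_)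
  simp only [smulLeftCLM_apply_apply hg, SchwartzMap.fourierInv_eq_fourier_neg,
    Complex.real_smul, mul_assoc]

/-- Multipliers with an even symbol are symmetric. -/
lemma integral_fourierMultiplierCLM_mul_comm {g : E3 → ℝ} (hg : g.HasTemperateGrowth)
    (hev : ∀ ξ, g (-ξ) = g ξ) (f h : 𝓢(E3, ℂ)) :
    ∫ x, fourierMultiplierCLM ℂ g f x * h x = ∫ x, f x * fourierMultiplierCLM ℂ g h x := by
  simp_rw [mul_comm (f _)]
  rw [integral_fourierMultiplierCLM_mul hg, integral_fourierMultiplierCLM_mul hg,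
    ← integral_neg_eq_self]
  refine integral_congr_ae (Eventually.of_forall fun ξ => ?_)
  simp only [hev, neg_neg]
  ring

lemma heat_heat (f : 𝓢(E3, ℂ)) {s t : ℝ} (hs : 0 ≤ s) (ht : 0 ≤ t) :
    heat (heat f s) t = heat f (s + t) := by
  rw [heat, heat, heat, fourierMultiplierCLM_fourierMultiplierCLM_apply (by fun_prop) (by fun_prop)]
  congr 2
  ext ξ
  simp only [Pi.mul_apply, heatSymbol, ← Real.exp_add, abs_of_nonneg hs, abs_of_nonneg ht,
    abs_of_nonneg (add_nonneg hs ht)]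
  ring_nf

lemma integral_heat_lineDerivOp_mul (f g : 𝓢(E3, ℂ)) (v w : E3) {t : ℝ} (ht : 0 ≤ t) :
    ∫ x, heat (∂_{v} f) t x * heat (∂_{w} g) t x
      = -∫ x, heat (∂_{w} (∂_{v} f)) (t + t) x * g x := by
  have h1 := integral_fourierMultiplierCLM_mul_comm (g := heatSymbol t) (by fun_prop)
    (fun ξ => by simp [heatSymbol]) (heat (∂_{v} f) t) (∂_{w} g)
  have h2 : fourierMultiplierCLM ℂ (heatSymbol t) (heat (∂_{v} f) t) = heat (∂_{v} f) (t + t) :=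
    heat_heat _ ht ht
  rw [h2] at h1
  refine h1.symm.trans ?_
  rw [SchwartzMap.integral_mul_lineDerivOp_right_eq_neg_left, lineDerivOp_heat]

lemma integral_exp_mul_heatSymbol {ε : ℝ} (hε : 0 < ε) (ξ : E3) :
    ∫ t in Ioi (0 : ℝ), Real.exp (-(2 * ε) * t) * heatSymbol (t + t) ξ = resSymbol ε ξ / 2 := by
  have hc : -(2 * ε + 8 * π ^ 2 * ‖ξ‖ ^ 2) < 0 := by
    have : 0 ≤ 8 * π ^ 2 * ‖ξ‖ ^ 2 := by positivity
    linarith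
  have := integral_exp_mul_Ioi hc 0
  rw [mul_zero, Real.exp_zero] at this
  calc _ = ∫ t in Ioi (0 : ℝ), Real.exp (-(2 * ε + 8 * π ^ 2 * ‖ξ‖ ^ 2) * t) := by
        refine setIntegral_congr_fun measurableSet_Ioi fun t ht => ?_
        rw [mem_Ioi] at ht
        simp only [heatSymbol, ← Real.exp_add, abs_of_pos (add_pos ht ht)]
        ring_nf
    _ = _ := by
        rw [this, resSymbol]
        have : 0 < ε + 4 * π ^ 2 * ‖ξ‖ ^ 2 := by positivity
        have h2 : 2 * ε + 8 * π ^ 2 * ‖ξ‖ ^ 2 = 2 * (ε + 4 * π ^ 2 * ‖ξ‖ ^ 2) := by ring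
        rw [h2, neg_div_neg_eq]
        field_simp

/-- The resolvent as a Laplace transform of the heat flow, tested against `g`. -/
lemma integral_res_mul {ε : ℝ} (hε : 0 < ε) (h g : 𝓢(E3, ℂ)) :
    ∫ x, res ε h x * g x
      = 2 * ∫ t in Ioi (0 : ℝ), (Real.exp (-(2 * ε) * t) : ℂ) * ∫ x, heat h (t + t) x * g x := by
  have hi : Integrable fun ξ => (𝓕 h : 𝓢(E3, ℂ)) ξ * (𝓕 g : 𝓢(E3, ℂ)) (-ξ) := by
    simp_rw [← SchwartzMap.fourierInv_eq_fourier_neg]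
    exact (𝓕⁻ g : 𝓢(E3, ℂ)).integrable.bdd_mul (𝓕 h : 𝓢(E3, ℂ)).continuous.aestronglyMeasurable
      (Eventually.of_forall fun x => (𝓕 h : 𝓢(E3, ℂ)).norm_le_seminorm ℝ x)
  have he : IntegrableOn (fun t : ℝ => (Real.exp (-(2 * ε) * t) : ℂ)) (Ioi 0) :=
    (integrableOn_exp_mul_Ioi (by linarith : -(2 * ε) < 0) 0).ofReal
  have hp := (he.mul_prod hi)
  have key : Integrable (Function.uncurry fun (t : ℝ) (ξ : E3) =>
      (Real.exp (-(2 * ε) * t) : ℂ) * (heatSymbol (t + t) ξ *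
        ((𝓕 h : 𝓢(E3, ℂ)) ξ * (𝓕 g : 𝓢(E3, ℂ)) (-ξ))))
      ((volume.restrict (Ioi (0 : ℝ))).prod volume) := by
    have c : Continuous fun z : ℝ × E3 => (heatSymbol (z.1 + z.1) z.2 : ℂ) := by
      unfold heatSymbol; fun_prop
    have := hp.bdd_mul (c := 1) c.aestronglyMeasurable (Eventually.of_forall fun z => by
      rw [Complex.norm_real, Real.norm_eq_abs, abs_of_pos (heatSymbol_pos _ _)]
      exact heatSymbol_le_one _ _)
    refine this.congr (Eventually.of_forall fun z => ?_)
    simp only [Function.uncurry]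
    ring
  have e1 : ∀ t : ℝ, (Real.exp (-(2 * ε) * t) : ℂ) * ∫ x, heat h (t + t) x * g x
      = ∫ ξ, (Real.exp (-(2 * ε) * t) : ℂ) * (heatSymbol (t + t) ξ *
        ((𝓕 h : 𝓢(E3, ℂ)) ξ * (𝓕 g : 𝓢(E3, ℂ)) (-ξ))) := fun t => by
    rw [heat, integral_fourierMultiplierCLM_mul (by fun_prop), integral_const_mul]
  simp_rw [e1]
  rw [integral_integral_swap key, res, integral_fourierMultiplierCLM_mul
    (resSymbol_hasTemperateGrowth hε), ← integral_const_mul]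
  refine integral_congr_ae (Eventually.of_forall fun ξ => ?_)
  simp only
  have e2 : ∀ t : ℝ, (Real.exp (-(2 * ε) * t) : ℂ) * (heatSymbol (t + t) ξ *
        ((𝓕 h : 𝓢(E3, ℂ)) ξ * (𝓕 g : 𝓢(E3, ℂ)) (-ξ)))
      = ((Real.exp (-(2 * ε) * t) * heatSymbol (t + t) ξ : ℝ) : ℂ)
        * ((𝓕 h : 𝓢(E3, ℂ)) ξ * (𝓕 g : 𝓢(E3, ℂ)) (-ξ)) := fun t => by push_cast; ring
  simp_rw [e2]
  rw [integral_mul_const, integral_complex_ofReal, integral_exp_mul_heatSymbol hε]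
  push_cast
  ring

/-- The operator `∂_j ∂_k (ε - Δ)⁻¹`. -/
def riesz (ε : ℝ) (j k : Fin 3) (f : 𝓢(E3, ℂ)) : 𝓢(E3, ℂ) :=
  ∂_{basisVec k} (∂_{basisVec j} (res ε f))

lemma lineDerivOp_res {ε : ℝ} (hε : 0 < ε) (f : 𝓢(E3, ℂ)) (v : E3) :
    ∂_{v} (res ε f) = res ε (∂_{v} f) :=
  lineDerivOp_fourierMultiplierCLM (resSymbol_hasTemperateGrowth hε) f v

lemma riesz_eq_res {ε : ℝ} (hε : 0 < ε) (j k : Fin 3) (f : 𝓢(E3, ℂ)) :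
    riesz ε j k f = res ε (∂_{basisVec k} (∂_{basisVec j} f)) := by
  rw [riesz, lineDerivOp_res hε, lineDerivOp_res hε]

lemma enorm_integral_riesz_mul_le {ε : ℝ} (hε : 0 < ε) (j k : Fin 3) (f g : 𝓢(E3, ℂ)) :
    ‖∫ x, riesz ε j k f x * g x‖ₑ ≤ 2 * ∫⁻ t in Ioi (0 : ℝ), ∫⁻ x,
      ‖heat (∂_{basisVec j} f) t x‖ₑ * ‖heat (∂_{basisVec k} g) t x‖ₑ := by
  rw [riesz_eq_res hε, integral_res_mul hε, enorm_mul]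
  have h2 : ‖(2 : ℂ)‖ₑ = 2 := by
    rw [← ofReal_norm]; simp
  rw [h2]
  gcongr
  refine (enorm_integral_le_lintegral_enorm _).trans ?_
  refine setLIntegral_mono' measurableSet_Ioi fun t ht => ?_
  rw [mem_Ioi] at ht
  have e : ∫ x, heat (∂_{basisVec k} (∂_{basisVec j} f)) (t + t) x * g x
      = -∫ x, heat (∂_{basisVec j} f) t x * heat (∂_{basisVec k} g) t x := by
    rw [integral_heat_lineDerivOp_mul _ _ _ _ ht.le, neg_neg]
  rw [e, enorm_mul, enorm_neg]
  have h1 : ‖(Real.exp (-(2 * ε) * t) : ℂ)‖ₑ ≤ 1 := by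
    rw [← ofReal_norm, Complex.norm_real, Real.norm_eq_abs, Real.abs_exp]
    refine ENNReal.ofReal_le_one.2 (Real.exp_le_one_iff.2 ?_)
    nlinarith
  calc _ ≤ 1 * ‖∫ x, heat (∂_{basisVec j} f) t x * heat (∂_{basisVec k} g) t x‖ₑ := by gcongr
    _ ≤ _ := by
      rw [one_mul]
      refine (enorm_integral_le_lintegral_enorm _).trans_eq ?_
      simp only [enorm_mul]

/-! ### `L^p` bounds by duality -/

section Duality

variable {p q : ℝ}

lemma exists_riesz_bilinear (hpq : p.HolderConjugate q) :
    ∃ K : ℝ, 0 < K ∧ ∀ ε : ℝ, 0 < ε → ∀ (j k : Fin 3) (f g : 𝓢(E3, ℂ)),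
      ‖∫ x, riesz ε j k f x * g x‖ ≤ K * ((∫ x, ‖f x‖ ^ p) + ∫ x, ‖g x‖ ^ q) := by
  have concl : ∀ {K : ℝ} (_ : 0 < K) {ε : ℝ} (_ : 0 < ε) (j k : Fin 3) (f g : 𝓢(E3, ℂ)),
      (∫⁻ t in Ioi (0 : ℝ), ∫⁻ x, ‖heat (∂_{basisVec j} f) t x‖ₑ
        * ‖heat (∂_{basisVec k} g) t x‖ₑ
        ≤ ENNReal.ofReal (K * ((∫ x, ‖f x‖ ^ p) + ∫ x, ‖g x‖ ^ q))) →
      ‖∫ x, riesz ε j k f x * g x‖ ≤ 2 * K * ((∫ x, ‖f x‖ ^ p) + ∫ x, ‖g x‖ ^ q) := by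
    intro K hK ε hε j k f g h
    have h0 : 0 ≤ (∫ x, ‖f x‖ ^ p) + ∫ x, ‖g x‖ ^ q :=
      add_nonneg (integral_nonneg fun x => by positivity) (integral_nonneg fun x => by positivity)
    have h1 := (enorm_integral_riesz_mul_le hε j k f g).trans (mul_le_mul_right h 2)
    have e2 : ∀ s : ℝ, 2 * ENNReal.ofReal s = ENNReal.ofReal (2 * s) := fun s => by
      rw [ENNReal.ofReal_mul zero_le_two, ENNReal.ofReal_ofNat]
    rw [← ofReal_norm, e2, ENNReal.ofReal_le_ofReal_iff (by positivity)] at h1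
    linarith
  rcases le_total 2 p with hp | hp
  · obtain ⟨m, d, h⟩ := exists_bellmanParams hp hpq
    have hd := h.d_pos
    have hK : 0 < (8 * d)⁻¹ * ((1 + d) * 2 ^ (p / 2)) := by positivity
    refine ⟨_, mul_pos zero_lt_two hK, fun ε hε j k f g => concl hK hε j k f g ?_⟩
    have := lintegral_heat_le h f g j k
    rwa [mul_div_cancel₀ _ two_ne_zero, mul_div_cancel₀ _ two_ne_zero] at this
  · have hq : 2 ≤ q := by
      have h1 := hpq.lt
      have h2 := hpq.mul_eq_add
      nlinarith
    obtain ⟨m, d, h⟩ := exists_bellmanParams hq hpq.symm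
    have hd := h.d_pos
    have hK : 0 < (8 * d)⁻¹ * ((1 + d) * 2 ^ (q / 2)) := by positivity
    refine ⟨_, mul_pos zero_lt_two hK, fun ε hε j k f g => concl hK hε j k f g ?_⟩
    have := lintegral_heat_le h g f k j
    rw [mul_div_cancel₀ _ two_ne_zero, mul_div_cancel₀ _ two_ne_zero] at this
    rw [add_comm (∫ x, ‖f x‖ ^ p)]
    simpa only [mul_comm] using this

lemma ofReal_holderConjugate (hpq : p.HolderConjugate q) :
    ENNReal.HolderConjugate (ENNReal.ofReal p) (ENNReal.ofReal q) :=
  ⟨by simpa using hpq.inv_add_inv_ennreal⟩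

lemma norm_toLp_rpow {g : E3 → ℂ} (hq : 0 < q) (hg : MemLp g (ENNReal.ofReal q)) :
    ‖hg.toLp g‖ ^ q = ∫ x, ‖g x‖ ^ q := by
  have h0 : 0 ≤ ∫ x, ‖g x‖ ^ q := integral_nonneg fun x => by positivity
  rw [Lp.norm_toLp, hg.eLpNorm_eq_integral_rpow_norm (by simpa using hq) (by simp),
    ENNReal.toReal_ofReal hq.le, ENNReal.toReal_ofReal (by positivity), ← Real.rpow_mul h0,
    inv_mul_cancel₀ hq.ne', Real.rpow_one]

/-- A bound of a pairing against all Schwartz functions extends to all of `L^q`. -/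
lemma norm_integral_mul_le_of_schwartz (hpq : p.HolderConjugate q) (h : 𝓢(E3, ℂ)) {K A : ℝ}
    (H : ∀ g : 𝓢(E3, ℂ), ‖∫ x, h x * g x‖ ≤ K * (A + ∫ x, ‖g x‖ ^ q)) {g : E3 → ℂ}
    (hg : MemLp g (ENNReal.ofReal q)) : ‖∫ x, h x * g x‖ ≤ K * (A + ∫ x, ‖g x‖ ^ q) := by
  have hq := hpq.symm.pos
  have := ofReal_holderConjugate hpq
  have : Fact (1 ≤ ENNReal.ofReal p) := ⟨by simpa using hpq.lt.le⟩
  have : Fact (1 ≤ ENNReal.ofReal q) := ⟨by simpa using hpq.symm.lt.le⟩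
  let Λ := (ContinuousLinearMap.mul ℂ ℂ).lpPairing volume (ENNReal.ofReal p) (ENNReal.ofReal q)
    (h.toLp (ENNReal.ofReal p))
  have Λe : ∀ {φ : E3 → ℂ} (hφ : MemLp φ (ENNReal.ofReal q)), Λ (hφ.toLp φ) = ∫ x, h x * φ x := by
    intro φ hφ
    refine (ContinuousLinearMap.lpPairing_eq_integral _ _ _).trans ?_
    refine integral_congr_ae ?_
    filter_upwards [h.coeFn_toLp (ENNReal.ofReal p), hφ.coeFn_toLp] with x h1 h2
    rw [h1, h2, ContinuousLinearMap.mul_apply']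
  have all : ∀ G : Lp ℂ (ENNReal.ofReal q) (volume : Measure E3),
      ‖Λ G‖ ≤ K * (A + ‖G‖ ^ q) := by
    refine isClosed_property (SchwartzMap.denseRange_toLpCLM (by simp)) (isClosed_le
      (by fun_prop) ?_) fun φ => ?_
    · exact continuous_const.mul (continuous_const.add
        (continuous_norm.rpow_const fun _ => Or.inr hq.le))
    · have e := H φ
      rw [← Λe (φ.memLp _), ← norm_toLp_rpow hq (φ.memLp _)] at e
      exact e
  rw [← Λe hg, ← norm_toLp_rpow hq hg]
  exact all _

lemma integral_norm_rpow_le_of_pairing (hpq : p.HolderConjugate q) (h : 𝓢(E3, ℂ)) {K A l : ℝ}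
    (hl : 0 < l) (hKl : 2 * K * l ^ (q - 1) = 1)
    (H : ∀ g : 𝓢(E3, ℂ), ‖∫ x, h x * g x‖ ≤ K * (A + ∫ x, ‖g x‖ ^ q)) :
    ∫ x, ‖h x‖ ^ p ≤ 2 * K * l⁻¹ * A := by
  have hq := hpq.symm.pos
  have hp := hpq.pos
  set φ : E3 → ℂ := fun x => l * (starRingEnd ℂ (h x) * ((‖h x‖ ^ (p - 2) : ℝ) : ℂ)) with hφ
  have nφ : ∀ x, ‖φ x‖ ^ q = l ^ q * ‖h x‖ ^ p := by
    intro x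
    have e : ‖φ x‖ = l * ‖h x‖ ^ (p - 1) := by
      simp only [hφ, norm_mul, Complex.norm_real, Real.norm_eq_abs, RCLike.norm_conj]
      rw [abs_of_pos hl, abs_of_nonneg (by positivity : 0 ≤ ‖h x‖ ^ (p - 2))]
      congr 1
      rcases eq_or_lt_of_le (norm_nonneg (h x)) with h0 | h0
      · rw [← h0, zero_mul, Real.zero_rpow (by linarith [hpq.lt])]
      · rw [← Real.rpow_one_add' h0.le (by linarith [hpq.lt])]
        ring_nf
    rw [e, Real.mul_rpow hl.le (by positivity), ← Real.rpow_mul (norm_nonneg _)]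
    congr 2
    have := hpq.mul_eq_add
    linarith
  have pφ : ∀ x, h x * φ x = ((l * ‖h x‖ ^ p : ℝ) : ℂ) := by
    intro x
    have e1 : h x * starRingEnd ℂ (h x) = ((‖h x‖ ^ 2 : ℝ) : ℂ) := by
      rw [Complex.mul_conj, Complex.normSq_eq_norm_sq]
    have e2 : ‖h x‖ ^ 2 * ‖h x‖ ^ (p - 2) = ‖h x‖ ^ p := by
      rcases eq_or_lt_of_le (norm_nonneg (h x)) with h0 | h0
      · rw [← h0, Real.zero_rpow hp.ne']; simp
      · rw [← Real.rpow_natCast, ← Real.rpow_add h0]; norm_num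
    rw [← e2]
    push_cast
    push_cast at e1
    rw [← e1, hφ]
    push_cast
    ring
  have hm : AEStronglyMeasurable φ := by
    have hh : Measurable ⇑h := h.continuous.measurable
    exact (by fun_prop : Measurable φ).aestronglyMeasurable
  have hi := h.integrable_norm_rpow hp
  have mφ : MemLp φ (ENNReal.ofReal q) := by
    rw [← integrable_norm_rpow_iff hm (by simpa using hq) (by simp), ENNReal.toReal_ofReal hq.le]
    simp_rw [nφ]
    exact hi.const_mul _
  have key := norm_integral_mul_le_of_schwartz hpq h H mφ
  have N0 : 0 ≤ ∫ x, ‖h x‖ ^ p := integral_nonneg fun x => by positivity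
  simp_rw [pφ, nφ] at key
  rw [integral_complex_ofReal, Complex.norm_real, integral_const_mul, integral_const_mul,
    Real.norm_of_nonneg (by positivity)] at key
  have e3 : l ^ q = l * l ^ (q - 1) := by
    rw [← Real.rpow_one_add' hl.le (by linarith)]; ring_nf
  set N := ∫ x, ‖h x‖ ^ p
  have e4 : 2 * K * l ^ q = l := by rw [e3]; linear_combination l * hKl
  have e5 : l * N ≤ 2 * K * A := by nlinarith
  calc N = l⁻¹ * (l * N) := by field_simp
    _ ≤ l⁻¹ * (2 * K * A) := by gcongr
    _ = _ := by ring

/-- Uniform `L^p` boundedness of `∂_j ∂_k (ε - Δ)⁻¹`. -/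
theorem exists_riesz_eLpNorm_le (hp : 1 < p) :
    ∃ C : ℝ, 0 < C ∧ ∀ ε : ℝ, 0 < ε → ∀ (j k : Fin 3) (f : 𝓢(E3, ℂ)),
      eLpNorm (riesz ε j k f) (ENNReal.ofReal p) volume
        ≤ ENNReal.ofReal C * eLpNorm f (ENNReal.ofReal p) volume := by
  have hpq := Real.HolderConjugate.conjExponent hp
  set q := p.conjExponent
  have hp0 : 0 < p := hpq.pos
  have hq1 : 0 < q - 1 := by linarith [hpq.symm.lt]
  obtain ⟨K, hK, H⟩ := exists_riesz_bilinear hpq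
  set l : ℝ := (2 * K)⁻¹ ^ (q - 1)⁻¹ with hl
  have l0 : 0 < l := by positivity
  have hKl : 2 * K * l ^ (q - 1) = 1 := by
    rw [hl, ← Real.rpow_mul (by positivity), inv_mul_cancel₀ hq1.ne', Real.rpow_one]
    field_simp
  refine ⟨(2 * K * l⁻¹) ^ p⁻¹, by positivity, fun ε hε j k f => ?_⟩
  have h := integral_norm_rpow_le_of_pairing hpq (riesz ε j k f) l0 hKl fun g => H ε hε j k f g
  have c1 := ((riesz ε j k f).memLp (ENNReal.ofReal p) volume).eLpNorm_eq_integral_rpow_norm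
    (by simpa using hp0) (by simp)
  have c2 := (f.memLp (ENNReal.ofReal p) volume).eLpNorm_eq_integral_rpow_norm
    (by simpa using hp0) (by simp)
  rw [c1, c2, ENNReal.toReal_ofReal hp0.le, ← ENNReal.ofReal_mul (by positivity),
    ← Real.mul_rpow (by positivity) (integral_nonneg fun x => by positivity)]
  refine ENNReal.ofReal_le_ofReal (Real.rpow_le_rpow (integral_nonneg fun x => by positivity) h
    (by positivity))

end Duality

/-! ### Commuting the resolvent with multiplication by a coordinate -/

section Coordinates

/-- Multiplication of a Schwartz function by the `i`-th coordinate. -/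
def mulX (i : Fin 3) (f : 𝓢(E3, ℂ)) : 𝓢(E3, ℂ) := smulLeftCLM ℂ (fun x : E3 => x i) f

lemma coord_hasTemperateGrowth (i : Fin 3) : (fun x : E3 => x i).HasTemperateGrowth :=
  (EuclideanSpace.proj (𝕜 := ℝ) i).hasTemperateGrowth

lemma mulX_apply (i : Fin 3) (f : 𝓢(E3, ℂ)) (x : E3) : mulX i f x = x i * f x := by
  rw [mulX, smulLeftCLM_apply_apply (coord_hasTemperateGrowth i), Complex.real_smul]

lemma lineDerivOp_comm (f : 𝓢(E3, ℂ)) (v w : E3) : ∂_{v} (∂_{w} f) = ∂_{w} (∂_{v} f) := by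
  have hw : (fun x : E3 => inner ℝ x w).HasTemperateGrowth := by fun_prop
  rw [lineDeriv_eq_fourierMultiplierCLM (f := f) w, lineDerivOp_smul,
    lineDerivOp_fourierMultiplierCLM hw, lineDeriv_eq_fourierMultiplierCLM w (f := ∂_{v} f)]

lemma lineDerivOp_mulX (i j : Fin 3) (f : 𝓢(E3, ℂ)) :
    ∂_{basisVec j} (mulX i f) = mulX i (∂_{basisVec j} f) + if i = j then f else 0 := by
  ext x
  have h1 : HasDerivAt (fun t : ℝ => (((x + t • basisVec j) i : ℝ) : ℂ))
      ((if i = j then 1 else 0 : ℝ) : ℂ) 0 := by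
    have h : HasDerivAt (fun t : ℝ => x i + t * (if i = j then 1 else 0))
        (if i = j then 1 else 0) 0 := by
      simpa using ((hasDerivAt_id (0 : ℝ)).mul_const (if i = j then (1 : ℝ) else 0)).const_add (x i)
    refine h.ofReal_comp.congr_of_eventuallyEq (Eventually.of_forall fun t => ?_)
    simp
  have h2 : HasLineDerivAt ℝ (mulX i f) _ x (basisVec j) :=
    (h1.mul (f.hasLineDerivAt x (basisVec j))).congr_of_eventuallyEq
      (Eventually.of_forall fun t => mulX_apply i f _)
  rw [((mulX i f).hasLineDerivAt x (basisVec j)).unique h2, add_apply, mulX_apply]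
  split_ifs <;> simp [add_comm]

variable {ε : ℝ}

lemma smul_res_sub_laplacian (hε : 0 < ε) (f : 𝓢(E3, ℂ)) :
    ε • res ε f - Δ (res ε f) = f := by
  have hn : (fun ξ : E3 => ‖ξ‖ ^ 2).HasTemperateGrowth := by fun_prop
  have hr := resSymbol_hasTemperateGrowth hε
  rw [SchwartzMap.laplacian_eq_fourierMultiplierCLM]
  change ε • fourierMultiplierCLM ℂ (resSymbol ε) f - -(2 * π) ^ 2 •
    fourierMultiplierCLM ℂ (fun ξ : E3 => ‖ξ‖ ^ 2) (fourierMultiplierCLM ℂ (resSymbol ε) f) = f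
  rw [fourierMultiplierCLM_fourierMultiplierCLM_apply hn hr,
    fourierMultiplierCLM_apply, fourierMultiplierCLM_apply, neg_smul, sub_neg_eq_add,
    ← FourierTransform.fourierInv_smul, ← FourierTransform.fourierInv_smul,
    ← FourierTransform.fourierInv_add]
  refine Eq.trans ?_ (FourierTransform.fourierInv_fourier_eq f : 𝓕⁻ (𝓕 f : 𝓢(E3, ℂ)) = f)
  congr 1
  ext ξ
  have h0 : ε + 4 * π ^ 2 * ‖ξ‖ ^ 2 ≠ 0 := by positivity
  rw [add_apply, smul_apply, smul_apply, smulLeftCLM_apply_apply hr,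
    smulLeftCLM_apply_apply (hn.mul hr), smul_smul, smul_smul, ← add_smul]
  convert one_smul ℝ _
  simp only [Pi.mul_apply, resSymbol]
  field_simp
  ring

lemma res_sub (ε : ℝ) (f g : 𝓢(E3, ℂ)) : res ε (f - g) = res ε f - res ε g := map_sub _ _ _
lemma res_smul (ε c : ℝ) (f : 𝓢(E3, ℂ)) : res ε (c • f) = c • res ε f := map_smul _ _ _
lemma mulX_sub (i : Fin 3) (f g : 𝓢(E3, ℂ)) : mulX i (f - g) = mulX i f - mulX i g :=
  map_sub _ _ _
lemma mulX_smul (i : Fin 3) (c : ℝ) (f : 𝓢(E3, ℂ)) : mulX i (c • f) = c • mulX i f :=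
  map_smul _ _ _
lemma mulX_sum (i : Fin 3) (f : Fin 3 → 𝓢(E3, ℂ)) : mulX i (∑ k, f k) = ∑ k, mulX i (f k) :=
  map_sum _ _ _

lemma laplacian_res (hε : 0 < ε) (f : 𝓢(E3, ℂ)) : Δ (res ε f) = res ε (Δ f) := by
  rw [laplacian_eq_sum_basisVec, laplacian_eq_sum_basisVec]
  simp_rw [lineDerivOp_res hε]
  exact (map_sum _ _ _).symm

lemma laplacian_mulX (i : Fin 3) (f : 𝓢(E3, ℂ)) :
    Δ (mulX i f) = mulX i (Δ f) + (2 : ℝ) • ∂_{basisVec i} f := by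
  rw [laplacian_eq_sum_basisVec, laplacian_eq_sum_basisVec, mulX_sum]
  have h : ∀ k, ∂_{basisVec k} (∂_{basisVec k} (mulX i f))
      = mulX i (∂_{basisVec k} (∂_{basisVec k} f))
        + (2 : ℝ) • if i = k then ∂_{basisVec k} f else 0 := fun k => by
    rw [lineDerivOp_mulX, lineDerivOp_add, lineDerivOp_mulX]
    split_ifs
    · rw [two_smul]; abel
    · simp
  simp only [h, Finset.sum_add_distrib, ← Finset.smul_sum]
  simp

lemma res_mulX (hε : 0 < ε) (i : Fin 3) (g : 𝓢(E3, ℂ)) :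
    res ε (mulX i g) = mulX i (res ε g) + (2 : ℝ) • ∂_{basisVec i} (res ε (res ε g)) := by
  have h1 := smul_res_sub_laplacian hε (mulX i (res ε g))
  rw [laplacian_res hε, laplacian_mulX, ← res_smul, ← res_sub, ← mulX_smul, ← sub_sub, ← mulX_sub,
    smul_res_sub_laplacian hε, res_sub, res_smul, ← lineDerivOp_res hε] at h1
  rw [← h1]
  abel

/-- If `Δ U = ∂₃ (x_i Ω)`, second derivatives of `U` are, modulo terms proportional to `x_i`,
Riesz-type transforms of `Ω`. -/
lemma lineDerivOp_lineDerivOp_sub_res (hε : 0 < ε) {i : Fin 3} (hi : i ≠ 2) (j k : Fin 3)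
    {U Ω : 𝓢(E3, ℂ)} (h : Δ U = ∂_{basisVec 2} (mulX i Ω)) (x : E3) :
    ∂_{basisVec k} (∂_{basisVec j} U) x
        - ε * res ε (∂_{basisVec k} (∂_{basisVec j} U)) x
      = -(x i * ∂_{basisVec k} (∂_{basisVec j} (∂_{basisVec 2} (res ε Ω))) x
        + (if i = j then riesz ε 2 k Ω x else 0) + (if i = k then riesz ε 2 j Ω x else 0)
        + 2 * riesz ε i j (riesz ε 2 k Ω) x) := by
  have h1 := smul_res_sub_laplacian hε (∂_{basisVec k} (∂_{basisVec j} U))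
  have h2 : Δ (res ε (∂_{basisVec k} (∂_{basisVec j} U)))
      = ∂_{basisVec k} (∂_{basisVec j} (∂_{basisVec 2} (res ε (mulX i Ω)))) := by
    rw [← lineDerivOp_res hε, ← lineDerivOp_res hε, lineDerivOp_res hε (mulX i Ω), ← h,
      ← laplacian_res hε]
    simp only [laplacian_eq_sum_basisVec, lineDerivOp_sum]
    refine Finset.sum_congr rfl fun m _ => ?_
    rw [lineDerivOp_comm _ (basisVec m) (basisVec k), lineDerivOp_comm _ (basisVec m) (basisVec j),
      lineDerivOp_comm _ (basisVec m) (basisVec k), lineDerivOp_comm _ (basisVec m) (basisVec j)]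
  have h3 : riesz ε i j (riesz ε 2 k Ω) = ∂_{basisVec k} (∂_{basisVec j}
      (∂_{basisVec 2} (∂_{basisVec i} (res ε (res ε Ω))))) := by
    rw [riesz, riesz, ← lineDerivOp_res hε, ← lineDerivOp_res hε,
      lineDerivOp_comm _ (basisVec i) (basisVec k), lineDerivOp_comm _ (basisVec j) (basisVec k),
      lineDerivOp_comm _ (basisVec i) (basisVec 2)]
  have h4 := congrArg (fun F : 𝓢(E3, ℂ) => F x) h1
  simp only [sub_apply, smul_apply, Complex.real_smul] at h4
  rw [h3]
  nth_rw 1 [← h4]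
  rw [h2, res_mulX hε]
  simp only [lineDerivOp_add, lineDerivOp_smul, lineDerivOp_mulX, if_neg hi, add_zero, add_apply,
    smul_apply, mulX_apply, Complex.real_smul, riesz, Complex.ofReal_ofNat]
  split_ifs <;> simp <;> ring

lemma tendsto_smul_res (f : 𝓢(E3, ℂ)) (x : E3) :
    Tendsto (fun n : ℕ => ((1 / ((n : ℝ) + 1) : ℝ) : ℂ) * res (1 / ((n : ℝ) + 1)) f x) atTop
      (𝓝 0) := by
  have hpos : ∀ n : ℕ, 0 < 1 / ((n : ℝ) + 1) := fun n => by positivity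
  have key : Tendsto (fun n : ℕ => ∫ ξ, (1 / ((n : ℝ) + 1)) * resSymbol (1 / ((n : ℝ) + 1)) ξ
      * ‖𝓕 f ξ‖) atTop (𝓝 (∫ _ : E3, (0 : ℝ))) := by
    have hc : Continuous ⇑(𝓕 f : 𝓢(E3, ℂ)) := (𝓕 f).continuous
    refine tendsto_integral_of_dominated_convergence (fun ξ => ‖𝓕 f ξ‖) (fun n => ?_)
      (𝓕 f).integrable.norm (fun n => Eventually.of_forall fun ξ => ?_) ?_
    · have := (resSymbol_hasTemperateGrowth (hpos n)).1.continuous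
      exact ((continuous_const.mul this).mul hc.norm).aestronglyMeasurable
    · rw [norm_mul, norm_norm]
      refine mul_le_of_le_one_left (norm_nonneg _) ?_
      rw [Real.norm_of_nonneg (mul_nonneg (hpos n).le (resSymbol_nonneg (hpos n) ξ)), resSymbol,
        ← div_eq_mul_inv, div_le_one (by have := hpos n; positivity)]
      have : 0 ≤ 4 * π ^ 2 * ‖ξ‖ ^ 2 := by positivity
      linarith
    · have h0 : ∀ᵐ ξ : E3, ξ ≠ 0 := by
        simp [ae_iff]
      filter_upwards [h0] with ξ hξ
      have hξ' : 0 < 4 * π ^ 2 * ‖ξ‖ ^ 2 := by positivity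
      have t := tendsto_one_div_add_atTop_nhds_zero_nat (𝕜 := ℝ)
      have := (t.mul ((t.add_const (4 * π ^ 2 * ‖ξ‖ ^ 2)).inv₀ (by positivity))).mul_const ‖𝓕 f ξ‖
      simpa [resSymbol] using this
  rw [integral_zero] at key
  refine squeeze_zero_norm (fun n => ?_) key
  rw [norm_mul, Complex.norm_real, Real.norm_of_nonneg (hpos n).le]
  simp_rw [mul_assoc]
  rw [integral_const_mul]
  refine mul_le_mul_of_nonneg_left ?_ (hpos n).le
  refine (norm_fourierMultiplierCLM_le (resSymbol_hasTemperateGrowth (hpos n)) f x).trans_eq ?_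
  simp_rw [abs_of_nonneg (resSymbol_nonneg (hpos n) _)]

/-- The part of `∂_k ∂_j U` expressed by Riesz-type transforms of `Ω`. -/
def rieszPart (ε : ℝ) (i j k : Fin 3) (Ω : 𝓢(E3, ℂ)) (x : E3) : ℂ :=
  (if i = j then riesz ε 2 k Ω x else 0) + (if i = k then riesz ε 2 j Ω x else 0)
    + 2 * riesz ε i j (riesz ε 2 k Ω) x

lemma continuous_rieszPart (ε : ℝ) (i j k : Fin 3) (Ω : 𝓢(E3, ℂ)) :
    Continuous (rieszPart ε i j k Ω) := by
  have h : ∀ (f : 𝓢(E3, ℂ)), Continuous ⇑f := fun f => f.continuous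
  unfold rieszPart
  split_ifs <;> fun_prop

lemma exists_rieszPart_eLpNorm_le {p : ℝ} (hp : 1 < p) :
    ∃ C : ℝ, 0 < C ∧ ∀ ε, 0 < ε → ∀ (i j k : Fin 3) (Ω : 𝓢(E3, ℂ)),
      eLpNorm (rieszPart ε i j k Ω) (ENNReal.ofReal p) volume
        ≤ ENNReal.ofReal C * eLpNorm Ω (ENNReal.ofReal p) volume := by
  obtain ⟨C, hC, h⟩ := exists_riesz_eLpNorm_le hp
  refine ⟨C + C + 2 * (C * C), by positivity, fun ε hε i j k Ω => ?_⟩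
  have h1p : 1 ≤ ENNReal.ofReal p := by
    rw [← ENNReal.ofReal_one]; exact ENNReal.ofReal_le_ofReal hp.le
  have m : ∀ f : 𝓢(E3, ℂ), AEStronglyMeasurable ⇑f volume := fun f =>
    f.continuous.aestronglyMeasurable
  have hite : ∀ (P : Prop) [Decidable P] (a b : Fin 3),
      AEStronglyMeasurable (fun x => if P then riesz ε a b Ω x else 0) volume
      ∧ eLpNorm (fun x => if P then riesz ε a b Ω x else 0) (ENNReal.ofReal p) volume
        ≤ ENNReal.ofReal C * eLpNorm Ω (ENNReal.ofReal p) volume := fun P _ a b => by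
    split_ifs
    · exact ⟨m _, h ε hε a b Ω⟩
    · exact ⟨aestronglyMeasurable_const, by simp⟩
  have h3 : eLpNorm (fun x => 2 * riesz ε i j (riesz ε 2 k Ω) x) (ENNReal.ofReal p) volume
      ≤ ENNReal.ofReal (2 * (C * C)) * eLpNorm Ω (ENNReal.ofReal p) volume := by
    have e := eLpNorm_const_smul (2 : ℂ) (⇑(riesz ε i j (riesz ε 2 k Ω))) (ENNReal.ofReal p) volume
    refine e.le.trans ?_
    have h2 : ‖(2 : ℂ)‖ₑ = ENNReal.ofReal 2 := by rw [← ofReal_norm]; simp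
    rw [h2, ENNReal.ofReal_mul zero_le_two, ENNReal.ofReal_mul hC.le, mul_assoc, mul_assoc]
    gcongr
    exact (h ε hε i j _).trans (by gcongr; exact h ε hε 2 k Ω)
  have e12 := (eLpNorm_add_le (hite (i = j) 2 k).1 (hite (i = k) 2 j).1 h1p).trans
    (add_le_add (hite (i = j) 2 k).2 (hite (i = k) 2 j).2)
  have e123 := (eLpNorm_add_le ((hite (i = j) 2 k).1.add (hite (i = k) 2 j).1)
    ((m (riesz ε i j (riesz ε 2 k Ω))).const_mul 2) h1p).trans (add_le_add e12 h3)
  rw [ENNReal.ofReal_add (by positivity) (by positivity), ENNReal.ofReal_add hC.le hC.le, add_mul,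
    add_mul]
  exact e123

/-- `L^p` bound for the tangential part of the Hessians of the solutions of
`Δ U_i = ∂₃ (x_i Ω)`. -/
theorem exists_tangential_hessian_eLpNorm_le {p : ℝ} (hp : 1 < p) :
    ∃ C : ℝ, 0 < C ∧ ∀ (U : Fin 3 → 𝓢(E3, ℂ)) (Ω : 𝓢(E3, ℂ)),
      (∀ i, i ≠ 2 → Δ (U i) = ∂_{basisVec 2} (mulX i Ω)) →
      ∀ (k : Fin 3) (θ : E3 → Fin 3 → ℝ), (∀ i, Measurable fun x => θ x i) →
      (∀ x i, |θ x i| ≤ 1) → (∀ x, θ x 2 = 0) → (∀ x, ∑ i, θ x i * x i = 0) →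
      eLpNorm (fun x => ∑ i, ∑ j, ((θ x i * θ x j : ℝ) : ℂ)
        * ∂_{basisVec k} (∂_{basisVec j} (U i)) x) (ENNReal.ofReal p) volume
        ≤ ENNReal.ofReal C * eLpNorm Ω (ENNReal.ofReal p) volume := by
  obtain ⟨C, hC, h⟩ := exists_rieszPart_eLpNorm_le hp
  refine ⟨9 * C, by positivity, fun U Ω hU k θ hm hθ h2 hx => ?_⟩
  have h1p : 1 ≤ ENNReal.ofReal p := by
    rw [← ENNReal.ofReal_one]; exact ENNReal.ofReal_le_ofReal hp.le
  set e : ℕ → ℝ := fun n => 1 / ((n : ℝ) + 1) with he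
  have hpos : ∀ n, 0 < e n := fun n => by simp only [he]; positivity
  set F : ℕ → E3 → ℂ := fun n x => ∑ i, ∑ j, ((θ x i * θ x j : ℝ) : ℂ)
      * (∂_{basisVec k} (∂_{basisVec j} (U i)) x
        - e n * res (e n) (∂_{basisVec k} (∂_{basisVec j} (U i))) x) with hF
  have hFe : ∀ n x, F n x = ∑ i, ∑ j, ((θ x i * θ x j : ℝ) : ℂ)
      * -rieszPart (e n) i j k Ω x := by
    intro n x
    have key : ∀ i j, ((θ x i * θ x j : ℝ) : ℂ) * (∂_{basisVec k} (∂_{basisVec j} (U i)) x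
        - e n * res (e n) (∂_{basisVec k} (∂_{basisVec j} (U i))) x)
        = ((θ x i * θ x j : ℝ) : ℂ) * -rieszPart (e n) i j k Ω x - ((θ x i * x i : ℝ) : ℂ)
          * (θ x j * ∂_{basisVec k} (∂_{basisVec j} (∂_{basisVec 2} (res (e n) Ω))) x) := by
      intro i j
      by_cases hi : i = 2
      · simp [hi, h2 x]
      · rw [lineDerivOp_lineDerivOp_sub_res (hpos n) hi j k (hU i hi) x, rieszPart]
        push_cast
        ring
    simp only [hF, key, Finset.sum_sub_distrib, ← Finset.mul_sum, ← Finset.sum_mul,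
      ← Complex.ofReal_sum, hx x]
    simp
  have hmeas : ∀ n, AEStronglyMeasurable (F n) volume := by
    intro n
    have : ∀ f : 𝓢(E3, ℂ), Measurable ⇑f := fun f => f.continuous.measurable
    have hm' : ∀ i, Measurable fun x => ((θ x i : ℝ) : ℂ) := fun i =>
      Complex.measurable_ofReal.comp (hm i)
    refine Measurable.aestronglyMeasurable ?_
    simp only [hF, Complex.ofReal_mul]
    fun_prop
  have hbound : ∀ n, eLpNorm (F n) (ENNReal.ofReal p) volume
      ≤ ENNReal.ofReal (9 * C) * eLpNorm Ω (ENNReal.ofReal p) volume := by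
    intro n
    have hle : ∀ x, ‖F n x‖ ≤ ∑ q : Fin 3 × Fin 3, ‖rieszPart (e n) q.1 q.2 k Ω x‖ := by
      intro x
      rw [hFe, ← Finset.univ_product_univ, Finset.sum_product]
      refine (norm_sum_le _ _).trans (Finset.sum_le_sum fun i _ => (norm_sum_le _ _).trans
        (Finset.sum_le_sum fun j _ => ?_))
      rw [norm_mul, norm_neg, Complex.norm_real, Real.norm_eq_abs, abs_mul]
      exact mul_le_of_le_one_left (norm_nonneg _)
        (mul_le_one₀ (hθ x i) (abs_nonneg _) (hθ x j))
    refine (eLpNorm_mono_real hle).trans ?_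
    have hs := eLpNorm_sum_le (μ := volume) (p := ENNReal.ofReal p) (s := Finset.univ)
      (f := fun (q : Fin 3 × Fin 3) x => ‖rieszPart (e n) q.1 q.2 k Ω x‖)
      (fun q _ => (continuous_rieszPart _ _ _ _ _).norm.aestronglyMeasurable) h1p
    have e1 : (fun x => ∑ q : Fin 3 × Fin 3, ‖rieszPart (e n) q.1 q.2 k Ω x‖)
        = ∑ q : Fin 3 × Fin 3, fun x => ‖rieszPart (e n) q.1 q.2 k Ω x‖ := by
      ext x; simp
    rw [e1]
    refine hs.trans ((Finset.sum_le_sum (g := fun _ => ENNReal.ofReal C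
      * eLpNorm Ω (ENNReal.ofReal p) volume) fun q _ => ?_).trans_eq ?_)
    · rw [eLpNorm_norm]
      exact h _ (hpos n) _ _ _ _
    · rw [Finset.sum_const, Finset.card_univ, Fintype.card_prod, Fintype.card_fin, nsmul_eq_mul,
        ENNReal.ofReal_mul (by norm_num), mul_assoc]
      norm_num
  refine Lp.eLpNorm_le_of_ae_tendsto (u := atTop) (Eventually.of_forall hbound) hmeas
    (Eventually.of_forall fun x => ?_)
  refine tendsto_finsetSum _ fun i _ => tendsto_finsetSum _ fun j _ => ?_
  have := ((tendsto_smul_res (∂_{basisVec k} (∂_{basisVec j} (U i))) x).const_sub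
    (∂_{basisVec k} (∂_{basisVec j} (U i)) x)).const_mul ((θ x i * θ x j : ℝ) : ℂ)
  rwa [sub_zero] at this

end Coordinates

/-! ### Partial derivatives of functions on `ℝ³` -/

section PartialDerivatives

lemma hasFDerivAt_coord (i : Fin 3) (x : E3) :
    HasFDerivAt (fun y : E3 => y i) (EuclideanSpace.proj i : E3 →L[ℝ] ℝ) x :=
  (EuclideanSpace.proj i : E3 →L[ℝ] ℝ).hasFDerivAt

lemma contDiff_coord (i : Fin 3) : ContDiff ℝ ∞ fun y : E3 => y i :=
  (EuclideanSpace.proj i : E3 →L[ℝ] ℝ).contDiff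

lemma pd_coord (i k : Fin 3) (x : E3) : pd k (fun y : E3 => y i) x = if i = k then 1 else 0 := by
  rw [pd, (hasFDerivAt_coord i x).fderiv]
  simp

lemma Filter.EventuallyEq.pd_eq {f g : E3 → ℝ} {x : E3} (h : f =ᶠ[𝓝 x] g) (k : Fin 3) :
    pd k f x = pd k g x := by
  rw [pd, pd, h.fderiv_eq]

lemma Filter.EventuallyEq.pd {f g : E3 → ℝ} {x : E3} (h : f =ᶠ[𝓝 x] g) (k : Fin 3) :
    pd k f =ᶠ[𝓝 x] pd k g :=
  h.eventuallyEq_nhds.mono fun _ hy => hy.pd_eq k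

lemma pd_add {f g : E3 → ℝ} {x : E3} (hf : DifferentiableAt ℝ f x) (hg : DifferentiableAt ℝ g x)
    (k : Fin 3) : pd k (fun y => f y + g y) x = pd k f x + pd k g x := by
  rw [pd, fderiv_fun_add hf hg]; rfl

lemma pd_mul {f g : E3 → ℝ} {x : E3} (hf : DifferentiableAt ℝ f x) (hg : DifferentiableAt ℝ g x)
    (k : Fin 3) : pd k (fun y => f y * g y) x = f x * pd k g x + g x * pd k f x := by
  rw [pd, fderiv_fun_mul hf hg]; rfl

lemma pd_coord_mul {f : E3 → ℝ} {x : E3} (hf : DifferentiableAt ℝ f x) (i k : Fin 3) :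
    pd k (fun y => y i * f y) x = x i * pd k f x + if i = k then f x else 0 := by
  rw [pd_mul (hasFDerivAt_coord i x).differentiableAt hf, pd_coord]
  simp

lemma ContDiff.pd {f : E3 → ℝ} (hf : ContDiff ℝ ∞ f) (k : Fin 3) : ContDiff ℝ ∞ (pd k f) :=
  (hf.fderiv_right (m := ∞) (by simp)).clm_apply contDiff_const

lemma ContDiffAt.pd {f : E3 → ℝ} {x : E3} (hf : ContDiffAt ℝ ∞ f x) (k : Fin 3) :
    ContDiffAt ℝ ∞ (pd k f) x :=
  (hf.fderiv_right (m := ∞) (by simp)).clm_apply contDiffAt_const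

lemma HasCompactSupport.pd {f : E3 → ℝ} (hf : HasCompactSupport f) (k : Fin 3) :
    HasCompactSupport (pd k f) :=
  hf.fderiv_apply ℝ _

lemma norm_le_sum_apply_single (L : E3 →L[ℝ] ℝ) :
    ‖L‖ ≤ ∑ k : Fin 3, |L (EuclideanSpace.single k 1)| := by
  refine L.opNorm_le_bound (by positivity) fun x => ?_
  have e : x = ∑ k : Fin 3, x k • EuclideanSpace.single k (1 : ℝ) := by
    ext i; simp [Finset.sum_apply, Pi.single_apply]
  conv_lhs => rw [e]
  rw [map_sum, Finset.sum_mul]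
  refine (norm_sum_le _ _).trans (Finset.sum_le_sum fun k _ => ?_)
  rw [map_smul, norm_smul, mul_comm, Real.norm_eq_abs (L _)]
  gcongr
  exact PiLp.norm_apply_le x k

lemma ae_coord_zero_ne_zero : ∀ᵐ x : E3, x 0 ≠ 0 := by
  have h : (LinearMap.ker (EuclideanSpace.proj 0 : E3 →L[ℝ] ℝ).toLinearMap) ≠ ⊤ := by
    intro h
    have : EuclideanSpace.single (0 : Fin 3) (1 : ℝ) ∈ (⊤ : Submodule ℝ E3) := trivial
    rw [← h] at this
    simp at this
  rw [ae_iff]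
  convert Measure.addHaar_submodule (volume : Measure E3) _ h using 2
  ext x
  simp

/-- Continuous functions that agree where `x₁ ≠ 0` are equal. -/
lemma Continuous.eq_of_eq_on_coord_zero_ne {f g : E3 → ℝ} (hf : Continuous f) (hg : Continuous g)
    (h : ∀ x : E3, x 0 ≠ 0 → f x = g x) : f = g :=
  hf.ext_on (Measure.dense_of_ae ae_coord_zero_ne_zero) hg fun x hx => h x hx

lemma eventually_coord_zero_ne {x : E3} (hx : x 0 ≠ 0) : ∀ᶠ y : E3 in 𝓝 x, y 0 ≠ 0 :=
  (contDiff_coord 0).continuous.continuousAt.eventually_ne hx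

end PartialDerivatives

/-! ### Functions of `(r, z)` -/

section Radial

lemma rad_pos {x : E3} (hx : x 0 ≠ 0) : 0 < rad x := by
  refine Real.sqrt_pos.2 ?_
  positivity

lemma rad_sq (x : E3) : rad x ^ 2 = x 0 ^ 2 + x 1 ^ 2 := Real.sq_sqrt (by positivity)

lemma hasFDerivAt_rad {x : E3} (hx : x 0 ≠ 0) :
    HasFDerivAt rad ((x 0 / rad x) • (EuclideanSpace.proj 0 : E3 →L[ℝ] ℝ)
      + (x 1 / rad x) • (EuclideanSpace.proj 1 : E3 →L[ℝ] ℝ)) x := by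
  have h := (((hasFDerivAt_coord 0 x).pow 2).add ((hasFDerivAt_coord 1 x).pow 2)).sqrt
    (by have : 0 < x 0 ^ 2 := by positivity
        have : 0 ≤ x 1 ^ 2 := by positivity
        simp only [Pi.add_apply]; positivity)
  refine h.congr_fderiv ?_
  have hr := rad_pos hx
  ext y
  have e : √(x 0 ^ 2 + x 1 ^ 2) = rad x := rfl
  simp [e]
  field_simp

lemma pd_radial {G : ℝ → ℝ → ℝ} {x : E3} (hx : x 0 ≠ 0)
    (hG : DifferentiableAt ℝ (fun v : ℝ × ℝ => G v.1 v.2) (rad x, x 2)) :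
    pd 0 (fun y => G (rad y) (y 2)) x = pdr G (rad x) (x 2) * (x 0 / rad x) ∧
    pd 1 (fun y => G (rad y) (y 2)) x = pdr G (rad x) (x 2) * (x 1 / rad x) ∧
    pd 2 (fun y => G (rad y) (y 2)) x = pdz G (rad x) (x 2) := by
  have hL := hG.hasFDerivAt
  set L := fderiv ℝ (fun v : ℝ × ℝ => G v.1 v.2) (rad x, x 2)
  have hr : HasDerivAt (fun r => G r (x 2)) (L (1, 0)) (rad x) :=
    HasFDerivAt.comp_hasDerivAt (f := fun r : ℝ => (r, x 2)) (rad x) hL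
      ((hasDerivAt_id (rad x)).prodMk (hasDerivAt_const (rad x) (x 2)))
  have hz : HasDerivAt (fun z => G (rad x) z) (L (0, 1)) (x 2) :=
    HasFDerivAt.comp_hasDerivAt (f := fun z : ℝ => (rad x, z)) (x 2) hL
      ((hasDerivAt_const (x 2) (rad x)).prodMk (hasDerivAt_id (x 2)))
  have hc := hL.comp x ((hasFDerivAt_rad hx).prodMk (hasFDerivAt_coord 2 x))
  have hL' : ∀ a b, L (a, b) = a * L (1, 0) + b * L (0, 1) := fun a b => by
    have : (a, b) = a • ((1 : ℝ), (0 : ℝ)) + b • ((0 : ℝ), (1 : ℝ)) := by simp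
    rw [this, map_add, map_smul, map_smul, smul_eq_mul, smul_eq_mul]
  have e : ∀ k, pd k (fun y => G (rad y) (y 2)) x = _ := fun k =>
    congrArg (fun M : E3 →L[ℝ] ℝ => M (EuclideanSpace.single k 1)) hc.fderiv
  rw [pdr, pdz, hr.deriv, hz.deriv]
  refine ⟨(e 0).trans ?_, (e 1).trans ?_, (e 2).trans ?_⟩ <;>
  · simp
    try rw [hL']
    try ring

lemma contDiffAt_rad {x : E3} (hx : x 0 ≠ 0) : ContDiffAt ℝ ∞ rad x := by
  refine ContDiffAt.sqrt ?_ ?_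
  · exact (((contDiff_coord 0).pow 2).add ((contDiff_coord 1).pow 2)).contDiffAt
  · positivity

end Radial

section HadamardQuotient

/-- Smoothness of integrals over `[0, 1]` depending smoothly on a parameter. -/
lemma contDiff_setIntegral_Icc {h : E3 × ℝ → ℝ} (hh : ContDiff ℝ ∞ h) :
    ContDiff ℝ ∞ fun x => ∫ s in Icc (0 : ℝ) 1, h (x, s) := by
  obtain ⟨χ, hχ, hχc, hχ1⟩ : ∃ χ : ℝ → ℝ, ContDiff ℝ ∞ χ ∧ HasCompactSupport χ ∧
      ∀ s ∈ Icc (0 : ℝ) 1, χ s = 1 := by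
    let b : ContDiffBump (0 : ℝ) := ⟨1, 2, one_pos, one_lt_two⟩
    refine ⟨b, b.contDiff, b.hasCompactSupport, fun s hs => b.one_of_mem_closedBall ?_⟩
    rw [mem_closedBall_zero_iff, Real.norm_eq_abs, abs_le]
    exact ⟨by linarith [hs.1], hs.2⟩
  have hK : IsCompact (Neg.neg '' tsupport χ) := hχc.isCompact.image continuous_neg
  have key := contDiffOn_convolution_right_with_param (𝕜 := ℝ) (n := ⊤) (μ := volume)
    (ContinuousLinearMap.mul ℝ ℝ) (f := (Icc (0 : ℝ) 1).indicator 1)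
    (g := fun (x : E3) (s : ℝ) => χ (-s) * h (x, -s)) (s := univ)
    isOpen_univ hK ?_ ?_ ?_
  · rw [univ_prod_univ, contDiffOn_univ] at key
    have := key.comp (contDiff_id.prodMk (contDiff_const (c := (0 : ℝ))) : ContDiff ℝ ∞
      fun x : E3 => (x, (0 : ℝ)))
    convert this using 1
    ext x
    simp only [Function.comp, id, MeasureTheory.convolution, ContinuousLinearMap.mul_apply', zero_sub, neg_neg]
    rw [← integral_indicator measurableSet_Icc]
    refine integral_congr_ae (Eventually.of_forall fun s => ?_)
    by_cases hs : s ∈ Icc (0 : ℝ) 1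
    · simp [hs, hχ1 s hs]
    · simp [hs]
  · intro x s _ hs
    have : χ (-s) = 0 := by
      refine image_eq_zero_of_notMem_tsupport fun hm => hs ⟨-s, hm, neg_neg s⟩
    simp [this]
  · exact ((integrable_indicator_iff measurableSet_Icc).2
      (integrableOn_const (by simp))).locallyIntegrable
  · refine ContDiff.contDiffOn ?_
    change ContDiff ℝ ∞ fun q : E3 × ℝ => χ (-q.2) * h (q.1, -q.2)
    exact (hχ.comp contDiff_snd.neg).mul (hh.comp (contDiff_fst.prodMk contDiff_snd.neg))

/-- Division by a coordinate: a smooth compactly supported function vanishing on `x₁ = 0` is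
`x₁` times a smooth compactly supported function. -/
lemma exists_eq_coord_zero_mul {W : E3 → ℝ} (hW : ContDiff ℝ ∞ W) (hc : HasCompactSupport W)
    (h0 : ∀ x : E3, x 0 = 0 → W x = 0) :
    ∃ Q : E3 → ℝ, ContDiff ℝ ∞ Q ∧ HasCompactSupport Q ∧ ∀ x, W x = x 0 * Q x := by
  set e : E3 := EuclideanSpace.single 0 1
  set γ : E3 × ℝ → E3 := fun q => q.1 + ((q.2 - 1) * q.1 0) • e with hγ
  have hγs : ContDiff ℝ ∞ γ := contDiff_fst.add ((((contDiff_snd.sub contDiff_const).mul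
    ((contDiff_coord 0).comp contDiff_fst))).smul contDiff_const)
  have hD : ContDiff ℝ ∞ fun q => pd 0 W (γ q) := (hW.pd 0).comp hγs
  have main : ∀ x, W x = x 0 * ∫ s in Icc (0 : ℝ) 1, pd 0 W (γ (x, s)) := by
    intro x
    have hd : ∀ s ∈ uIcc (0 : ℝ) 1, HasDerivAt (fun s => W (γ (x, s)))
        (x 0 * pd 0 W (γ (x, s))) s := by
      intro s _
      have h1 : HasDerivAt (fun s : ℝ => γ (x, s)) (x 0 • e) s := by
        have := (((hasDerivAt_id s).sub_const 1).mul_const (x 0)).smul_const e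
        simpa [hγ] using this.const_add x
      have h2 := ((hW.differentiable (by simp)) (γ (x, s))).hasFDerivAt.comp_hasDerivAt s h1
      rw [map_smul] at h2
      exact h2
    have hcont : Continuous fun s : ℝ => x 0 * pd 0 W (γ (x, s)) :=
      continuous_const.mul (hD.continuous.comp (Continuous.prodMk_right x))
    have := intervalIntegral.integral_eq_sub_of_hasDerivAt hd (hcont.intervalIntegrable 0 1)
    have e1 : γ (x, 1) = x := by simp [hγ]
    have e0 : W (γ (x, 0)) = 0 := h0 _ (by simp [hγ, e])
    rw [e0, e1, sub_zero, intervalIntegral.integral_const_mul,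
      intervalIntegral.integral_of_le zero_le_one, ← integral_Icc_eq_integral_Ioc] at this
    exact this.symm
  refine ⟨_, contDiff_setIntegral_Icc hD, ?_, main⟩
  · refine HasCompactSupport.intro hc fun x hx => ?_
    by_cases hx0 : x 0 = 0
    · have : ∀ s, pd 0 W (γ (x, s)) = 0 := fun s => by
        have hg : γ (x, s) = x := by simp [hγ, hx0]
        rw [hg]
        refine image_eq_zero_of_notMem_tsupport fun hm => hx ?_
        exact tsupport_fderiv_apply_subset ℝ _ hm
      simp [this]
    · have h1 := main x
      rw [image_eq_zero_of_notMem_tsupport hx] at h1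
      simpa [hx0] using h1.symm

end HadamardQuotient

/-! ### The estimate for swirl-free fields -/

section SwirlFree

/-- A real test function as a complex Schwartz function. -/
def toSchwartzC (f : E3 → ℝ) (hf : ContDiff ℝ ∞ f) (hc : HasCompactSupport f) : 𝓢(E3, ℂ) :=
  HasCompactSupport.toSchwartzMap (f := fun x => (f x : ℂ))
    (hc.comp_left (g := fun t : ℝ => (t : ℂ)) Complex.ofReal_zero)
    (Complex.ofRealCLM.contDiff.comp hf)

lemma toSchwartzC_apply {f : E3 → ℝ} (hf : ContDiff ℝ ∞ f) (hc : HasCompactSupport f) (x : E3) :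
    toSchwartzC f hf hc x = f x := rfl

lemma lineDerivOp_toSchwartzC {f : E3 → ℝ} (hf : ContDiff ℝ ∞ f) (hc : HasCompactSupport f)
    (k : Fin 3) :
    ∂_{basisVec k} (toSchwartzC f hf hc) = toSchwartzC (pd k f) (hf.pd k) (hc.pd k) := by
  ext x
  rw [lineDerivOp_apply_eq_fderiv]
  have h := Complex.ofRealCLM.hasFDerivAt.comp x ((hf.differentiable (by simp)) x).hasFDerivAt
  exact congrArg (fun M : E3 →L[ℝ] ℂ => M (basisVec k)) h.fderiv

variable {U : Fin 3 → E3 → ℝ} {ur uz : ℝ → ℝ → ℝ}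

/-- The function `u^r / r` on `ℝ³`. -/
def overRad (ur : ℝ → ℝ → ℝ) (x : E3) : ℝ := ur (rad x) (x 2) / rad x

lemma contDiffAt_overRad (hur : ContDiff ℝ ∞ fun v : ℝ × ℝ => ur v.1 v.2) {x : E3}
    (hx : x 0 ≠ 0) : ContDiffAt ℝ ∞ (overRad ur) x :=
  ((hur.contDiffAt.comp x ((contDiffAt_rad hx).prodMk (contDiff_coord 2).contDiffAt))).div
    (contDiffAt_rad hx) (rad_pos hx).ne'

lemma coord_one_mul_pd_overRad (hur : ContDiff ℝ ∞ fun v : ℝ × ℝ => ur v.1 v.2) {x : E3}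
    (hx : x 0 ≠ 0) :
    x 1 * pd 0 (overRad ur) x = x 0 * pd 1 (overRad ur) x ∧
      pd 2 (overRad ur) x = pdz ur (rad x) (x 2) / rad x := by
  have hG : DifferentiableAt ℝ (fun v : ℝ × ℝ => (fun r z => ur r z / r) v.1 v.2) (rad x, x 2) :=
    (hur.contDiffAt.div (contDiffAt_fst (n := ∞)) (rad_pos hx).ne').differentiableAt (by simp)
  obtain ⟨h0, h1, h2⟩ := pd_radial (G := fun r z => ur r z / r) hx hG
  refine ⟨?_, h2.trans ?_⟩
  · change x 1 * pd 0 (fun y => _) x = x 0 * pd 1 (fun y => _) x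
    erw [h0, h1]
    ring
  · simp only [pdz, deriv_div_const]

/-- Components of the angular unit vector `e_θ`. -/
def eTheta (x : E3) : Fin 3 → ℝ := ![-(x 1) / rad x, x 0 / rad x, 0]

/-- A swirl-free divergence-free test field with radial component `u^r` and axial component
`u^z`. -/
structure SwirlFreeField (U : Fin 3 → E3 → ℝ) (ur uz : ℝ → ℝ → ℝ) : Prop where
  contDiff : ∀ i, ContDiff ℝ ∞ (U i)
  hasCompactSupport : ∀ i, HasCompactSupport (U i)
  contDiff_ur : ContDiff ℝ ∞ fun v : ℝ × ℝ => ur v.1 v.2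
  contDiff_uz : ContDiff ℝ ∞ fun v : ℝ × ℝ => uz v.1 v.2
  eq_mul : ∀ i, i ≠ 2 → ∀ x : E3, x 0 ≠ 0 → U i x = x i * overRad ur x
  eq_uz : ∀ x : E3, x 0 ≠ 0 → U 2 x = uz (rad x) (x 2)
  div_eq_zero : ∀ x, ∑ i, pd i (U i) x = 0

namespace SwirlFreeField

lemma pd_eq (h : SwirlFreeField U ur uz) {i : Fin 3} (hi : i ≠ 2) (k : Fin 3) {x : E3}
    (hx : x 0 ≠ 0) :
    pd k (U i) x = x i * pd k (overRad ur) x + if i = k then overRad ur x else 0 := by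
  have e : U i =ᶠ[𝓝 x] fun y => y i * overRad ur y :=
    (eventually_coord_zero_ne hx).mono fun y hy => h.eq_mul i hi y hy
  rw [e.pd_eq, pd_coord_mul ((contDiffAt_overRad h.contDiff_ur hx).differentiableAt (by simp))]

lemma pd_pd_eq (h : SwirlFreeField U ur uz) {i : Fin 3} (hi : i ≠ 2) (j k : Fin 3) {x : E3}
    (hx : x 0 ≠ 0) :
    pd k (pd j (U i)) x = x i * pd k (pd j (overRad ur)) x
      + (if i = k then pd j (overRad ur) x else 0)
      + if i = j then pd k (overRad ur) x else 0 := by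
  have hs := contDiffAt_overRad h.contDiff_ur hx
  have e : pd j (U i) =ᶠ[𝓝 x] fun y => y i * pd j (overRad ur) y
      + if i = j then overRad ur y else 0 :=
    (eventually_coord_zero_ne hx).mono fun y hy => h.pd_eq hi j hy
  have hd : DifferentiableAt ℝ (pd j (overRad ur)) x := (hs.pd j).differentiableAt (by simp)
  have hm : DifferentiableAt ℝ (fun y : E3 => y i * pd j (overRad ur) y) x :=
    (hasFDerivAt_coord i x).differentiableAt.mul hd
  rw [e.pd_eq, pd_add hm, pd_coord_mul hd]
  · split_ifs with h1 h2 <;> simp [pd]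
  · split_ifs
    · exact hs.differentiableAt (by simp)
    · exact differentiableAt_const _

lemma curl_eq_zero (h : SwirlFreeField U ur uz) : pd 0 (U 1) = pd 1 (U 0) := by
  refine ((h.contDiff 1).pd 0).continuous.eq_of_eq_on_coord_zero_ne
    ((h.contDiff 0).pd 1).continuous fun x hx => ?_
  rw [h.pd_eq (by decide) 0 hx, h.pd_eq (by decide) 1 hx]
  simp [(coord_one_mul_pd_overRad h.contDiff_ur hx).1]

/-- The components of the vorticity in Cartesian coordinates. -/
lemma pd_sub_pd_eq (h : SwirlFreeField U ur uz) {i : Fin 3} (hi : i ≠ 2) {x : E3}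
    (hx : x 0 ≠ 0) : pd 2 (U i) x - pd i (U 2) x = x i * OmegaFun ur uz x := by
  have e : U 2 =ᶠ[𝓝 x] fun y => uz (rad y) (y 2) :=
    (eventually_coord_zero_ne hx).mono fun y hy => h.eq_uz y hy
  obtain ⟨h0, h1, -⟩ := pd_radial hx ((h.contDiff_uz.differentiable (by simp)) (rad x, x 2))
  rw [h.pd_eq hi 2 hx, if_neg hi, (coord_one_mul_pd_overRad h.contDiff_ur hx).2, e.pd_eq, OmegaFun]
  have hi' : i = 0 ∨ i = 1 := by omega
  rcases hi' with rfl | rfl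
  · rw [h0]; ring
  · rw [h1]; ring

/-- `Ω` extends to a test function, and the vorticity is `x_i Ω`. -/
lemma exists_omega (h : SwirlFreeField U ur uz) :
    ∃ Q : E3 → ℝ, ContDiff ℝ ∞ Q ∧ HasCompactSupport Q ∧ 
      (∀ x : E3, x 0 ≠ 0 → Q x = OmegaFun ur uz x) ∧
      ∀ i, i ≠ 2 → ∀ x, pd 2 (U i) x - pd i (U 2) x = x i * Q x := by
  set W : Fin 3 → E3 → ℝ := fun i x => pd 2 (U i) x - pd i (U 2) x with hWdef
  have hW : ∀ i, ContDiff ℝ ∞ (W i) := fun i => ((h.contDiff i).pd 2).sub ((h.contDiff 2).pd i)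
  have hWd : ∀ i x, DifferentiableAt ℝ (W i) x := fun i x => (hW i).differentiable (by simp) x
  have hWe : ∀ i, i ≠ 2 → ∀ x : E3, x 0 ≠ 0 → W i x = x i * OmegaFun ur uz x :=
    fun i hi x hx => h.pd_sub_pd_eq hi hx
  have hWc : HasCompactSupport (W 0) :=
    ((h.hasCompactSupport 0).pd 2).sub ((h.hasCompactSupport 2).pd 0)
  have hcross : (fun x : E3 => x 1 * W 0 x) = fun x : E3 => x 0 * W 1 x :=
    ((contDiff_coord 1).continuous.mul (hW 0).continuous).eq_of_eq_on_coord_zero_ne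
      ((contDiff_coord 0).continuous.mul (hW 1).continuous) fun x hx => by
        change x 1 * W 0 x = x 0 * W 1 x
        rw [hWe 0 (by decide) x hx, hWe 1 (by decide) x hx]; ring
  have h0 : ∀ x : E3, x 0 = 0 → W 0 x = 0 := by
    intro x hx
    by_cases hx1 : x 1 = 0
    · have := congrArg (fun f => pd 1 f x) hcross
      simpa [pd_coord_mul (hWd _ _), hx, hx1] using this
    · have := congrFun hcross x
      simpa [hx, hx1] using this
  obtain ⟨Q, hQ, hQc, hQe⟩ := exists_eq_coord_zero_mul (hW 0) hWc h0
  refine ⟨Q, hQ, hQc, fun x hx => ?_, fun i hi x => ?_⟩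
  · have := hQe x
    rw [hWe 0 (by decide) x hx] at this
    exact (mul_left_cancel₀ hx this).symm
  · have hi' : i = 0 ∨ i = 1 := by omega
    rcases hi' with rfl | rfl
    · exact hQe x
    · refine congrFun (f := W 1) (g := fun x => x 1 * Q x) ?_ x
      refine (hW 1).continuous.eq_of_eq_on_coord_zero_ne
        ((contDiff_coord 1).continuous.mul hQ.continuous) fun y hy => ?_
      have := congrFun hcross y
      simp only [hQe y] at this
      refine mul_left_cancel₀ hy ?_
      linarith

lemma pd_overRad_eq (h : SwirlFreeField U ur uz) (k : Fin 3) {x : E3} (hx : x 0 ≠ 0) :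
    pd k (overRad ur) x = ∑ i, ∑ j, eTheta x i * eTheta x j * pd k (pd j (U i)) x := by
  have hr := rad_pos hx
  have hsq := rad_sq x
  have hc := (coord_one_mul_pd_overRad h.contDiff_ur hx).1
  set a := eTheta x 0 with ha
  set b := eTheta x 1 with hb
  have ha' : a = -(x 1) / rad x := rfl
  have hb' : b = x 0 / rad x := rfl
  have h2 : eTheta x 2 = 0 := rfl
  have hab : a ^ 2 + b ^ 2 = 1 := by
    rw [ha', hb']; field_simp; linarith
  have habx : a * x 0 + b * x 1 = 0 := by rw [ha', hb']; ring
  have habd : a * pd 0 (overRad ur) x + b * pd 1 (overRad ur) x = 0 := by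
    rw [ha', hb']; field_simp; linarith
  simp only [Fin.sum_univ_three, h.pd_pd_eq (show (0 : Fin 3) ≠ 2 by decide) _ _ hx,
    h.pd_pd_eq (show (1 : Fin 3) ≠ 2 by decide) _ _ hx, ← ha, ← hb, h2]
  simp
  linear_combination (norm := skip) (-pd k (overRad ur) x) * hab
    - (a * pd k (pd 0 (overRad ur)) x + b * pd k (pd 1 (overRad ur)) x) * habx
    - ((if 0 = k then a else 0) + (if 1 = k then b else 0)) * habd
  split_ifs <;> ring

end SwirlFreeField

lemma abs_coord_le_rad (x : E3) : |x 0| ≤ rad x ∧ |x 1| ≤ rad x :=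
  ⟨Real.abs_le_sqrt (by nlinarith [sq_nonneg (x 1)]), Real.abs_le_sqrt (by nlinarith [sq_nonneg (x 0)])⟩

lemma SwirlFreeField.laplacian_eq (h : SwirlFreeField U ur uz) {Q : E3 → ℝ} (hQ : ContDiff ℝ ∞ Q)
    (hQc : HasCompactSupport Q)
    (hW : ∀ i, i ≠ 2 → ∀ x, pd 2 (U i) x - pd i (U 2) x = x i * Q x) {i : Fin 3} (hi : i ≠ 2) :
    Δ (toSchwartzC (U i) (h.contDiff i) (h.hasCompactSupport i))
      = ∂_{basisVec 2} (mulX i (toSchwartzC Q hQ hQc)) := by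
  set V : Fin 3 → 𝓢(E3, ℂ) := fun i => toSchwartzC (U i) (h.contDiff i) (h.hasCompactSupport i)
  have hd : ∀ k i x, ∂_{basisVec k} (V i) x = pd k (U i) x := fun k i x => by
    simp only [V, lineDerivOp_toSchwartzC, toSchwartzC_apply]
  have hcurl : ∂_{basisVec 0} (V 1) = ∂_{basisVec 1} (V 0) := by
    ext x
    rw [hd, hd, h.curl_eq_zero]
  have hdiv : ∂_{basisVec 0} (V 0) + ∂_{basisVec 1} (V 1) = -∂_{basisVec 2} (V 2) := by
    ext x
    have := h.div_eq_zero x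
    rw [Fin.sum_univ_three] at this
    rw [add_apply, neg_apply, hd, hd, hd]
    exact_mod_cast eq_neg_of_add_eq_zero_left this
  have hvort : ∂_{basisVec 2} (V i) - ∂_{basisVec i} (V 2) = mulX i (toSchwartzC Q hQ hQc) := by
    ext x
    rw [sub_apply, hd, hd, mulX_apply, toSchwartzC_apply]
    exact_mod_cast hW i hi x
  rw [← hvort, sub_eq_add_neg, lineDerivOp_add, lineDerivOp_neg,
    lineDerivOp_comm (V 2) _ (basisVec i), ← lineDerivOp_neg, ← hdiv, lineDerivOp_add,
    laplacian_eq_sum_basisVec, Fin.sum_univ_three]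
  have hi' : i = 0 ∨ i = 1 := by omega
  rcases hi' with rfl | rfl
  · rw [lineDerivOp_comm (V 1), hcurl]
    abel
  · rw [lineDerivOp_comm (V 0) _ (basisVec 0), ← hcurl]
    abel

theorem exists_swirlFree_eLpNorm_fderiv_le {p : ℝ} (hp : 1 < p) :
    ∃ C : ℝ, 0 < C ∧ ∀ (U : Fin 3 → E3 → ℝ) (ur uz : ℝ → ℝ → ℝ), SwirlFreeField U ur uz →
      eLpNorm (fun x => fderiv ℝ (overRad ur) x) (ENNReal.ofReal p) volume
        ≤ ENNReal.ofReal C * eLpNorm (OmegaFun ur uz) (ENNReal.ofReal p) volume := by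
  obtain ⟨C, hC, hmain⟩ := exists_tangential_hessian_eLpNorm_le hp
  refine ⟨3 * C, by positivity, fun U ur uz h => ?_⟩
  have h1p : 1 ≤ ENNReal.ofReal p := by
    rw [← ENNReal.ofReal_one]; exact ENNReal.ofReal_le_ofReal hp.le
  obtain ⟨Q, hQ, hQc, hQe, hW⟩ := h.exists_omega
  set V : Fin 3 → 𝓢(E3, ℂ) := fun i => toSchwartzC (U i) (h.contDiff i) (h.hasCompactSupport i)
    with hV
  have hcoord : ∀ i, Measurable fun x : E3 => x i := fun i => (contDiff_coord i).continuous.measurable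
  have hrad : Measurable rad := by unfold rad; fun_prop
  have hθm : ∀ i, Measurable fun x => eTheta x i := by
    intro i
    fin_cases i
    · exact (hcoord 1).neg.div hrad
    · exact (hcoord 0).div hrad
    · exact measurable_const
  have hθ1 : ∀ x i, |eTheta x i| ≤ 1 := by
    intro x i
    have hr : 0 ≤ rad x := Real.sqrt_nonneg _
    fin_cases i
    · change |-(x 1) / rad x| ≤ 1
      rw [abs_div, abs_neg, abs_of_nonneg hr]
      exact div_le_one_of_le₀ (abs_coord_le_rad x).2 hr
    · change |x 0 / rad x| ≤ 1
      rw [abs_div, abs_of_nonneg hr]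
      exact div_le_one_of_le₀ (abs_coord_le_rad x).1 hr
    · simp [eTheta]
  have hθx : ∀ x : E3, ∑ i, eTheta x i * x i = 0 := fun x => by
    simp [Fin.sum_univ_three, eTheta]
    ring
  set F : Fin 3 → E3 → ℂ := fun k x => ∑ i, ∑ j, ((eTheta x i * eTheta x j : ℝ) : ℂ)
        * ∂_{basisVec k} (∂_{basisVec j} (V i)) x with hF
  have hFm : ∀ k, AEStronglyMeasurable (fun x => ‖F k x‖) volume := by
    intro k
    have hm : ∀ f : 𝓢(E3, ℂ), Measurable ⇑f := fun f => f.continuous.measurable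
    have hm' : ∀ i, Measurable fun x => ((eTheta x i : ℝ) : ℂ) := fun i =>
      Complex.measurable_ofReal.comp (hθm i)
    refine Measurable.aestronglyMeasurable ?_
    simp only [hF, Complex.ofReal_mul]
    fun_prop
  have hFb : ∀ k, eLpNorm (fun x => ‖F k x‖) (ENNReal.ofReal p) volume
      ≤ ENNReal.ofReal C * eLpNorm (OmegaFun ur uz) (ENNReal.ofReal p) volume := by
    intro k
    rw [eLpNorm_norm]
    refine (hmain V (toSchwartzC Q hQ hQc) (fun i hi => h.laplacian_eq hQ hQc hW hi) k eTheta
      hθm hθ1 (fun x => rfl) hθx).trans_eq ?_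
    congr 1
    refine eLpNorm_congr_norm_ae ?_
    filter_upwards [ae_coord_zero_ne_zero] with x hx
    rw [toSchwartzC_apply, Complex.norm_real, hQe x hx]
  have hle : ∀ᵐ x : E3, ‖fderiv ℝ (overRad ur) x‖ ≤ ∑ k, ‖F k x‖ := by
    filter_upwards [ae_coord_zero_ne_zero] with x hx
    refine (norm_le_sum_apply_single _).trans (Finset.sum_le_sum fun k _ => le_of_eq ?_)
    change |pd k (overRad ur) x| = _
    rw [h.pd_overRad_eq k hx, ← Real.norm_eq_abs, ← Complex.norm_real]
    simp only [hF, hV, lineDerivOp_toSchwartzC, toSchwartzC_apply]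
    push_cast
    rfl
  refine (eLpNorm_mono_ae_real hle).trans ?_
  have hs := eLpNorm_sum_le (μ := volume) (p := ENNReal.ofReal p) (s := Finset.univ)
    (f := fun k x => ‖F k x‖) (fun k _ => hFm k) h1p
  have e1 : (fun x => ∑ k, ‖F k x‖) = ∑ k, fun x => ‖F k x‖ := by
    ext x; simp
  rw [e1]
  refine hs.trans ((Finset.sum_le_sum fun k _ => hFb k).trans_eq ?_)
  rw [Finset.sum_const, Finset.card_univ, Fintype.card_fin, nsmul_eq_mul,
    ENNReal.ofReal_mul (by norm_num), mul_assoc]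
  norm_num

end SwirlFree

/-! ### Removing the swirl -/

section Symmetrization

/-- The reflection `x₂ ↦ -x₂`. -/
def reflect : E3 →L[ℝ] E3 :=
  ContinuousLinearMap.id ℝ E3
    - (2 : ℝ) • (EuclideanSpace.proj 1 : E3 →L[ℝ] ℝ).smulRight (EuclideanSpace.single 1 1)

lemma reflect_zero (x : E3) : reflect x 0 = x 0 := by simp [reflect]
lemma reflect_one (x : E3) : reflect x 1 = -x 1 := by simp [reflect]; ring
lemma reflect_two (x : E3) : reflect x 2 = x 2 := by simp [reflect]

lemma rad_reflect (x : E3) : rad (reflect x) = rad x := by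
  simp [rad, reflect_zero, reflect_one]

lemma reflect_reflect (x : E3) : reflect (reflect x) = x := by
  ext i
  fin_cases i <;> simp [reflect_zero, reflect_one, reflect_two]

/-- Reflection is an involutive homeomorphism. -/
def reflectHomeo : E3 ≃ₜ E3 where
  toFun := reflect
  invFun := reflect
  left_inv := reflect_reflect
  right_inv := reflect_reflect
  continuous_toFun := reflect.continuous
  continuous_invFun := reflect.continuous

/-- The sign of a Cartesian component under the reflection. -/
def reflectSign (i : Fin 3) : ℝ := if i = 1 then -1 else 1

lemma reflect_single (i : Fin 3) :
    reflect (EuclideanSpace.single i 1) = reflectSign i • EuclideanSpace.single i (1 : ℝ) := by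
  ext j
  fin_cases i <;> fin_cases j <;> simp [reflect, reflectSign] <;> norm_num

lemma pd_comp_reflect {f : E3 → ℝ} (hf : Differentiable ℝ f) (i : Fin 3) (x : E3) :
    pd i (fun y => f (reflect y)) x = reflectSign i * pd i f (reflect x) := by
  have h := (hf (reflect x)).hasFDerivAt.comp x reflect.hasFDerivAt
  refine (congrArg (fun M : E3 →L[ℝ] ℝ => M (EuclideanSpace.single i 1)) h.fderiv).trans ?_
  simp [reflect_single, pd]

/-- Average of a vector field and its mirror image. -/
def symmetrize (u : E3 → E3) (i : Fin 3) (x : E3) : ℝ :=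
  (1 / 2) * (u x i + reflectSign i * u (reflect x) i)

lemma symmetrize_swirlFreeField {u : E3 → E3} {ur uθ uz : ℝ → ℝ → ℝ} (hu : ContDiff ℝ ∞ u)
    (hc : HasCompactSupport u) (hur : ContDiff ℝ ∞ fun v : ℝ × ℝ => ur v.1 v.2)
    (huz : ContDiff ℝ ∞ fun v : ℝ × ℝ => uz v.1 v.2) (ha : AxisymVec u ur uθ uz)
    (hdiv : ∀ x : E3, (∑ i : Fin 3, pd i (fun y => u y i) x) = 0) :
    SwirlFreeField (symmetrize u) ur uz := by
  have hui : ∀ i, ContDiff ℝ ∞ fun x => u x i := fun i => (contDiff_coord i).comp hu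
  have hui' : ∀ i, ContDiff ℝ ∞ fun x => u (reflect x) i := fun i =>
    (hui i).comp reflect.contDiff
  have hci : ∀ i, HasCompactSupport fun x => u x i := fun i =>
    hc.comp_left (g := fun y : E3 => y i) rfl
  have hci' : ∀ i, HasCompactSupport fun x => u (reflect x) i := fun i =>
    (hci i).comp_homeomorph reflectHomeo
  have hax : ∀ x : E3, x 0 ≠ 0 → _ := fun x hx => ha x (rad_pos hx).ne'
  have hax' : ∀ x : E3, x 0 ≠ 0 → _ := fun x hx =>
    ha (reflect x) (by rw [rad_reflect]; exact (rad_pos hx).ne')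
  simp only [reflect_zero, reflect_one, reflect_two, rad_reflect] at hax'
  refine ⟨fun i => ?_, fun i => ?_, hur, huz, fun i hi x hx => ?_, fun x hx => ?_, fun x => ?_⟩
  · exact contDiff_const.mul ((hui i).add (contDiff_const.mul (hui' i)))
  · exact ((hci i).add ((hci' i).mul_left (f := fun _ => reflectSign i))).mul_left
      (f := fun _ => (1 / 2 : ℝ))
  · have hi' : i = 0 ∨ i = 1 := by omega
    obtain ⟨h0, h1, -⟩ := hax x hx
    obtain ⟨h0', h1', -⟩ := hax' x hx
    rcases hi' with rfl | rfl
    · rw [symmetrize, h0, h0', overRad, reflectSign, if_neg (by decide)]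
      ring
    · rw [symmetrize, h1, h1', overRad, reflectSign, if_pos rfl]
      ring
  · rw [symmetrize, (hax x hx).2.2, (hax' x hx).2.2, reflectSign, if_neg (by decide)]
    ring
  · have key : ∀ i, pd i (symmetrize u i) x
        = (1 / 2) * (pd i (fun y => u y i) x + pd i (fun y => u y i) (reflect x)) := by
      intro i
      have d1 := (hui i).differentiable (by simp)
      have d2 := (hui' i).differentiable (by simp)
      have hs : reflectSign i * reflectSign i = 1 := by unfold reflectSign; split_ifs <;> norm_num
      have e : pd i (symmetrize u i) x = (1 / 2) * (pd i (fun y => u y i) x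
          + reflectSign i * pd i (fun y => u (reflect y) i) x) := by
        exact congrArg (fun M : E3 →L[ℝ] ℝ => M (EuclideanSpace.single i 1))
          (((d1 x).hasFDerivAt.add ((d2 x).hasFDerivAt.const_mul (reflectSign i))).const_mul
            (1 / 2)).fderiv
      rw [e, pd_comp_reflect d1, ← mul_assoc, hs, one_mul]
    simp only [key, ← Finset.mul_sum, Finset.sum_add_distrib, hdiv]
    simp

end Symmetrization

end Analysis

/-- For `1 < p < ∞` there is `C_p > 0` such that for every smooth
divergence-free axially symmetric vector field `u = u^r e_r + u^θ e_θ + u^z e_z`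
on `ℝ³` with sufficient decay, `‖∇(u^r/r)‖_{L^p} ≤ C_p ‖Ω‖_{L^p}`, where
`Ω = w^θ/r` and `u^r/r` is regarded as a function on `ℝ³`. -/
theorem grad_ur_over_r_estimate (p : ℝ) (hp : 1 < p) :
    ∃ C : ℝ, 0 < C ∧
      ∀ (u : E3 → E3) (ur uθ uz : ℝ → ℝ → ℝ),
        ContDiff ℝ (⊤ : ℕ∞) u → HasCompactSupport u →
        ContDiff ℝ (⊤ : ℕ∞) (fun v : ℝ × ℝ => ur v.1 v.2) →
        ContDiff ℝ (⊤ : ℕ∞) (fun v : ℝ × ℝ => uθ v.1 v.2) →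
        ContDiff ℝ (⊤ : ℕ∞) (fun v : ℝ × ℝ => uz v.1 v.2) →
        AxisymVec u ur uθ uz →
        (∀ x : E3, (∑ i : Fin 3, pd i (fun y => u y i) x) = 0) →
        eLpNorm (fun x => fderiv ℝ (fun y : E3 => ur (rad y) (y 2) / rad y) x)
            (ENNReal.ofReal p) volume
          ≤ ENNReal.ofReal C * eLpNorm (OmegaFun ur uz) (ENNReal.ofReal p) volume := by
  obtain ⟨C, hC, h⟩ := exists_swirlFree_eLpNorm_fderiv_le hp
  exact ⟨C, hC, fun u ur uθ uz hu hc hur _ huz ha hdiv =>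
    h _ ur uz (symmetrize_swirlFreeField hu hc hur huz ha hdiv)⟩
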